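/- (1/(4π⁴))·∫₀^π∫₀^π∫₀^π∫₀^π (1 − (1/4)(cos φ₁ + cos φ₂ + cos φ₃ + cos φ₄))^{-1} dφ₁ dφ₂ dφ₃ dφ₄ = (12/π⁴)·∫₀^∞ I₀(t) [K₀(t)]⁵ t dt. -/

import Mathlib

open Real MeasureTheory Set

/-- Modified Bessel function `I₀(t) = (1/π)∫₀^π exp(t cos θ) dθ`. -/
noncomputable def I0 (t : ℝ) : ℝ := (1 / π) * ∫ θ in (0:ℝ)..π, exp (t * cos θ)

/-- Modified Bessel function `K₀(t) = ∫₀^∞ exp(−t cosh u) du`. -/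
noncomputable def K0 (t : ℝ) : ℝ := ∫ u in Ioi (0:ℝ), exp (-(t * Real.cosh u))

/-- Rising factorial `(a)ₙ = a(a+1)⋯(a+n−1)`. -/
noncomputable def ris (a : ℝ) (n : ℕ) : ℝ := ∏ k ∈ Finset.range n, (a + k)

/-- Generalized hypergeometric series `ₚF_q(a; b | x)`. -/
noncomputable def pFq (a b : List ℝ) (x : ℝ) : ℝ :=
  ∑' n : ℕ, ((a.map fun p => ris p n).prod / (b.map fun q => ris q n).prod) * x ^ n
    / (n.factorial : ℝ)

set_option linter.all false

noncomputable def K1 (t : ℝ) : ℝ := ∫ u in Ioi (0:ℝ), cosh u * exp (-(t * cosh u))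
noncomputable def I1 (t : ℝ) : ℝ := (1 / π) * ∫ θ in (0:ℝ)..π, cos θ * exp (t * cos θ)

lemma cosh_ge_exp (u : ℝ) : exp u / 2 ≤ cosh u := by
  rw [Real.cosh_eq]; have := Real.exp_pos (-u); linarith

lemma cosh_pow_bound (j : ℕ) {t : ℝ} (ht : 0 < t) (u : ℝ) :
    cosh u ^ j * exp (-(t * cosh u)) ≤ (2 * ((j+1).factorial : ℝ) / t^(j+1)) * exp (-u) := by
  have hc : 0 < cosh u := Real.cosh_pos u
  have h1 := Real.pow_div_factorial_le_exp (t * cosh u) (by positivity) (j+1)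
  have hf : (0:ℝ) < ((j+1).factorial : ℝ) := by positivity
  have h2 : exp (-(t * cosh u)) ≤ ((j+1).factorial : ℝ) / (t * cosh u)^(j+1) := by
    rw [Real.exp_neg, ← one_div, div_le_div_iff₀ (exp_pos _) (by positivity)]
    rw [div_le_iff₀ hf] at h1; linarith
  have h3 : 1 / cosh u ≤ 2 * exp (-u) := by
    rw [Real.exp_neg, div_le_iff₀ hc]
    have := cosh_ge_exp u
    have he := Real.exp_pos u
    rw [mul_assoc, inv_mul_eq_div, mul_div_assoc', le_div_iff₀ he]; linarith
  calc cosh u ^ j * exp (-(t * cosh u)) ≤ cosh u ^ j * (((j+1).factorial : ℝ) / (t * cosh u)^(j+1)) := by gcongr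
    _ = (((j+1).factorial : ℝ) / t^(j+1)) * (1 / cosh u) := by rw [mul_pow]; field_simp; try ring
    _ ≤ (((j+1).factorial : ℝ) / t^(j+1)) * (2 * exp (-u)) := by gcongr
    _ = _ := by ring

lemma integrable_cosh_pow (j : ℕ) {t : ℝ} (ht : 0 < t) :
    IntegrableOn (fun u => cosh u ^ j * exp (-(t * cosh u))) (Ioi 0) := by
  refine Integrable.mono' ((integrableOn_exp_neg_Ioi 0).const_mul (2 * ((j+1).factorial : ℝ) / t^(j+1))) ?_ ?_
  · exact Continuous.aestronglyMeasurable (by fun_prop)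
  · refine Filter.Eventually.of_forall fun u => ?_
    rw [Real.norm_of_nonneg (by have := Real.cosh_pos u; positivity)]
    exact cosh_pow_bound j ht u

lemma hasDerivAt_coshint (j : ℕ) {t : ℝ} (ht : 0 < t) :
    HasDerivAt (fun t => ∫ u in Ioi (0:ℝ), cosh u ^ j * exp (-(t * cosh u)))
      (-∫ u in Ioi (0:ℝ), cosh u ^ (j+1) * exp (-(t * cosh u))) t := by
  have := (hasDerivAt_integral_of_dominated_loc_of_deriv_le (μ := volume.restrict (Ioi (0:ℝ)))
    (F := fun t u => cosh u ^ j * exp (-(t * cosh u)))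
    (F' := fun t u => -(cosh u ^ (j+1) * exp (-(t * cosh u))))
    (bound := fun u => cosh u ^ (j+1) * exp (-((t/2) * cosh u))) (x₀ := t) (s := Ioi (t/2))
    (Ioi_mem_nhds (by linarith)) ?_ (integrable_cosh_pow j ht) ?_ ?_ (integrable_cosh_pow (j+1) (by positivity)) ?_).2
  · rwa [integral_neg] at this
  · exact Filter.Eventually.of_forall fun x => Continuous.aestronglyMeasurable (by fun_prop)
  · exact Continuous.aestronglyMeasurable (by fun_prop)
  · refine Filter.Eventually.of_forall fun u x hx => ?_
    have hc := Real.cosh_pos u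
    rw [norm_neg, Real.norm_of_nonneg (by positivity)]
    have : t/2 < x := hx
    gcongr
  · refine Filter.Eventually.of_forall fun u x hx => ?_
    have h := ((((hasDerivAt_id x).mul_const (cosh u)).neg).exp).const_mul (cosh u ^ j)
    refine h.congr_deriv ?_
    simp only [id, Pi.neg_apply]; ring

lemma K0_eq : K0 = fun t => ∫ u in Ioi (0:ℝ), cosh u ^ 0 * exp (-(t * cosh u)) := by
  funext t; simp [K0]
lemma K1_eq : K1 = fun t => ∫ u in Ioi (0:ℝ), cosh u ^ 1 * exp (-(t * cosh u)) := by
  funext t; simp [K1]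

lemma hasDerivAt_K0 {t : ℝ} (ht : 0 < t) : HasDerivAt K0 (-K1 t) t := by
  rw [K0_eq, K1_eq]; exact hasDerivAt_coshint 0 ht

lemma tendsto_sinh_exp {t : ℝ} (ht : 0 < t) :
    Filter.Tendsto (fun u => -(sinh u * exp (-(t * cosh u)))) Filter.atTop (nhds 0) := by
  have h0 : Filter.Tendsto (fun u : ℝ => (2 * ((1+1).factorial : ℝ) / t^(1+1)) * exp (-u)) Filter.atTop (nhds 0) := by
    have := (Real.tendsto_exp_neg_atTop_nhds_zero).const_mul (2 * ((1+1).factorial : ℝ) / t^(1+1))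
    rwa [mul_zero] at this
  refine squeeze_zero_norm (fun u => ?_) h0
  refine le_trans ?_ (cosh_pow_bound 1 ht u)
  rw [norm_neg, norm_mul, Real.norm_of_nonneg (exp_pos _).le, pow_one]
  gcongr
  rw [Real.norm_eq_abs, Real.abs_sinh]
  exact (Real.sinh_lt_cosh _).le.trans (by rw [Real.cosh_abs])

lemma hasDerivAt_K1 {t : ℝ} (ht : 0 < t) : HasDerivAt K1 (-(K0 t + K1 t / t)) t := by
  have h := hasDerivAt_coshint 1 ht
  rw [← K1_eq] at h
  convert h using 2
  have hint : IntegrableOn (fun u => t * (sinh u^2 * exp (-(t * cosh u))) - cosh u * exp (-(t * cosh u))) (Ioi 0) := by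
    have h2 := ((integrable_cosh_pow 2 ht).sub (integrable_cosh_pow 0 ht)).const_mul t
    have h1 := h2.sub (integrable_cosh_pow 1 ht)
    refine h1.congr (Filter.Eventually.of_forall fun u => ?_)
    simp only [Pi.sub_apply]
    rw [Real.sinh_sq]; ring
  have h3 := integral_Ioi_of_hasDerivAt_of_tendsto' (f := fun u => -(sinh u * exp (-(t * cosh u))))
    (a := 0) (m := 0) (fun u _ => by
      have := (((Real.hasDerivAt_sinh u).mul (((Real.hasDerivAt_cosh u).const_mul t).neg.exp))).neg
      refine this.congr_deriv (g' := t * (sinh u^2 * exp (-(t * cosh u))) - cosh u * exp (-(t * cosh u))) ?_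
      simp only [Pi.neg_apply]; ring) hint
      (tendsto_sinh_exp ht)
  simp only [Real.sinh_zero, zero_mul, neg_zero, sub_zero] at h3
  have h4 : (∫ u in Ioi (0:ℝ), cosh u ^ (1+1) * exp (-(t * cosh u))) = K0 t + K1 t / t := by
    have e1 : ∀ u, cosh u ^ (1+1) * exp (-(t * cosh u)) = (1/t) * (t * (sinh u^2 * exp (-(t * cosh u))) - cosh u * exp (-(t * cosh u))) + (cosh u ^ 0 * exp (-(t * cosh u)) + (1/t) * (cosh u ^ 1 * exp (-(t * cosh u)))) := by
      intro u; rw [Real.sinh_sq]; field_simp; ring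
    simp_rw [e1]
    have hs : IntegrableOn (fun u => cosh u ^ 0 * exp (-(t * cosh u)) + (1/t) * (cosh u ^ 1 * exp (-(t * cosh u)))) (Ioi 0) :=
      (integrable_cosh_pow 0 ht).add ((integrable_cosh_pow 1 ht).const_mul _)
    rw [integral_add (hint.const_mul _) hs,
      integral_add (integrable_cosh_pow 0 ht) ((integrable_cosh_pow 1 ht).const_mul _), integral_const_mul, h3,
      integral_const_mul, K0_eq, K1_eq]
    ring
  exact h4.symm

lemma exp_neg_quarter_le {w : ℝ} (hw : 0 < w) : exp (-(w/4)) ≤ w ^ (-(1/8) : ℝ) := by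
  have h1 : exp (-(2*w)) ≤ 1 / w := by
    rw [Real.exp_neg, ← one_div]
    exact one_div_le_one_div_of_le hw (by have := Real.add_one_le_exp (2*w); linarith)
  have : exp (-(w/4)) = (exp (-(2*w))) ^ (1/8:ℝ) := by
    rw [← Real.exp_mul]; ring_nf
  rw [this, Real.rpow_neg hw.le, ← Real.inv_rpow hw.le]
  apply Real.rpow_le_rpow (exp_pos _).le _ (by norm_num)
  rwa [← one_div]

lemma key_cosh_bound {t u : ℝ} (ht : 0 < t) :
    exp (-((t * cosh u)/4)) ≤ t ^ (-(1/8) : ℝ) * (2 * exp (-(1/8) * u)) := by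
  have hc := Real.cosh_pos u
  refine (exp_neg_quarter_le (by positivity)).trans ?_
  rw [Real.mul_rpow ht.le hc.le]
  gcongr
  calc cosh u ^ (-(1/8) : ℝ) ≤ (exp u / 2) ^ (-(1/8) : ℝ) :=
        Real.rpow_le_rpow_of_nonpos (by positivity) (cosh_ge_exp u) (by norm_num)
    _ = exp (-(1/8) * u) * 2 ^ (1/8:ℝ) := by
        rw [Real.div_rpow (exp_pos _).le (by norm_num), ← Real.exp_mul, Real.rpow_neg (by norm_num : (0:ℝ) ≤ 2)]
        rw [div_inv_eq_mul]; ring_nf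
    _ ≤ exp (-(1/8) * u) * 2 := by
        gcongr
        exact Real.rpow_le_self_of_one_le (by norm_num) (by norm_num)
    _ = _ := by ring

lemma int_exp8 : ∫ u in Ioi (0:ℝ), exp (-(1/8) * u) = 8 := by
  rw [integral_exp_mul_Ioi (by norm_num)]; norm_num

lemma int8 : IntegrableOn (fun u:ℝ => exp (-(1/8) * u)) (Ioi (0:ℝ)) := integrableOn_exp_mul_Ioi (by norm_num) 0

lemma K0_bound {t : ℝ} (ht : 0 < t) : K0 t ≤ 128 * t ^ (-(1/8) : ℝ) * exp (-(5*t/8)) := by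
  have h : K0 t ≤ ∫ u in Ioi (0:ℝ), exp (-(5*t/8)) * (t ^ (-(1/8) : ℝ) * (2 * exp (-(1/8) * u))) := by
    rw [K0]
    refine integral_mono (by have := integrable_cosh_pow 0 ht; simp only [pow_zero, one_mul] at this; exact this) ?_ ?_
    · exact (((int8).const_mul _).const_mul _).const_mul _
    · intro u
      have hc := Real.one_le_cosh u
      have : exp (-(t * cosh u)) ≤ exp (-(5*t/8)) * exp (-((t * cosh u)/4)) := by
        rw [← Real.exp_add]; apply Real.exp_le_exp.2; nlinarith
      refine this.trans ?_
      exact mul_le_mul_of_nonneg_left (key_cosh_bound ht) (exp_pos _).le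
  refine h.trans ?_
  simp_rw [integral_const_mul]; rw [int_exp8]
  have : 0 ≤ rexp (-(5 * t / 8)) * (t ^ (-(1 / 8):ℝ)) := by positivity
  nlinarith

lemma tK1_bound {t : ℝ} (ht : 0 < t) : t * K1 t ≤ 128 * t ^ (-(1/8) : ℝ) * exp (-(5*t/8)) := by
  have h : t * K1 t ≤ ∫ u in Ioi (0:ℝ), exp (-(5*t/8)) * (8 * (t ^ (-(1/8) : ℝ) * (2 * exp (-(1/8) * u)))) := by
    rw [K1, ← integral_const_mul]
    refine integral_mono ?_ ?_ ?_
    · have := (integrable_cosh_pow 1 ht); simp only [pow_one] at this; exact this.const_mul t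
    · exact ((((int8).const_mul _).const_mul _).const_mul _).const_mul _
    · intro u
      have hc := Real.one_le_cosh u
      have h8 : (t * cosh u) * exp (-((t * cosh u)/8)) ≤ 8 := by
        rw [Real.exp_neg, ← div_eq_mul_inv, div_le_iff₀ (exp_pos _)]
        have := Real.add_one_le_exp ((t * cosh u)/8); linarith
      have e : t * (cosh u * exp (-(t * cosh u))) = ((t * cosh u) * exp (-((t * cosh u)/8))) * (exp (-((5 * (t * cosh u)/8))) * exp (-((t * cosh u)/4))) := by
        rw [← Real.exp_add, mul_assoc (t * cosh u), ← Real.exp_add]; ring_nf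
      have h5 : exp (-((5 * (t * cosh u)/8))) ≤ exp (-(5*t/8)) := by
        apply Real.exp_le_exp.2; nlinarith
      show t * (cosh u * exp (-(t * cosh u))) ≤ _
      rw [e]
      calc _ ≤ 8 * (exp (-(5*t/8)) * (t ^ (-(1/8) : ℝ) * (2 * exp (-(1/8) * u)))) := by
            gcongr
            exact key_cosh_bound ht
        _ = _ := by ring
  refine h.trans ?_
  simp_rw [integral_const_mul]; rw [int_exp8]
  apply le_of_eq; ring

lemma K0_nonneg (t : ℝ) : 0 ≤ K0 t := integral_nonneg fun u => (exp_pos _).le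
lemma K1_nonneg (t : ℝ) : 0 ≤ K1 t := integral_nonneg fun u => mul_nonneg (Real.cosh_pos u).le (exp_pos _).le

lemma hasDerivAt_cosint (j : ℕ) (t : ℝ) :
    HasDerivAt (fun t => ∫ θ in (0:ℝ)..π, cos θ ^ j * exp (t * cos θ))
      (∫ θ in (0:ℝ)..π, cos θ ^ (j+1) * exp (t * cos θ)) t := by
  refine (intervalIntegral.hasDerivAt_integral_of_dominated_loc_of_deriv_le
    (F := fun t θ => cos θ ^ j * exp (t * cos θ))
    (F' := fun t θ => (cos θ ^ (j+1) * exp (t * cos θ)))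
    (bound := fun _ => exp (|t| + 1)) (x₀ := t) (s := Metric.ball t 1)
    (Metric.ball_mem_nhds _ one_pos) ?_ ?_ ?_ ?_ ?_ ?_).2
  · exact Filter.Eventually.of_forall fun x => Continuous.aestronglyMeasurable (by fun_prop)
  · exact Continuous.intervalIntegrable (by fun_prop) _ _
  · exact Continuous.aestronglyMeasurable (by fun_prop)
  · refine Filter.Eventually.of_forall fun u _ x hx => ?_
    rw [norm_mul, norm_pow, Real.norm_of_nonneg (exp_pos _).le, Real.norm_eq_abs]
    have h1 : |cos u| ^ (j+1) ≤ 1 := pow_le_one₀ (abs_nonneg _) (abs_cos_le_one u)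
    have h2 : exp (x * cos u) ≤ exp (|t| + 1) := by
      apply Real.exp_le_exp.2
      have hx' : |x| ≤ |t| + 1 := by
        have : |x - t| < 1 := by simpa [Real.dist_eq] using hx
        have := abs_sub_abs_le_abs_sub x t; linarith
      calc x * cos u ≤ |x * cos u| := le_abs_self _
        _ = |x| * |cos u| := abs_mul _ _
        _ ≤ |x| * 1 := by gcongr; exact abs_cos_le_one u
        _ ≤ _ := by linarith
    calc _ ≤ 1 * exp (|t| + 1) := by gcongr
      _ = _ := one_mul _
  · exact intervalIntegrable_const
  · refine Filter.Eventually.of_forall fun u _ x hx => ?_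
    have h := ((((hasDerivAt_id x).mul_const (cos u))).exp).const_mul (cos u ^ j)
    refine h.congr_deriv ?_
    simp only [id]; ring

lemma hasDerivAt_I0 (t : ℝ) : HasDerivAt I0 (I1 t) t := by
  have := (hasDerivAt_cosint 0 t).const_mul (1/π)
  have hI0 : I0 = fun t => 1/π * ∫ θ in (0:ℝ)..π, cos θ ^ 0 * exp (t * cos θ) := by funext t; simp [I0]
  have hI1 : I1 t = 1/π * ∫ θ in (0:ℝ)..π, cos θ ^ (0+1) * exp (t * cos θ) := by simp [I1]
  rw [hI0, hI1]; exact this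

lemma hasDerivAt_I1 {t : ℝ} (ht : 0 < t) : HasDerivAt I1 (I0 t - I1 t / t) t := by
  have h := (hasDerivAt_cosint 1 t).const_mul (1/π)
  have hI : I1 = fun t => 1/π * ∫ θ in (0:ℝ)..π, cos θ ^ 1 * exp (t * cos θ) := by funext t; simp [I1]
  rw [← hI] at h
  refine h.congr_deriv ?_
  have h3 := intervalIntegral.integral_eq_sub_of_hasDerivAt (a := 0) (b := π)
    (f := fun u => sin u * exp (t * cos u))
    (f' := fun u => cos u * exp (t * cos u) - t * (sin u^2 * exp (t * cos u))) (fun u _ => by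
      have := (Real.hasDerivAt_sin u).mul (((Real.hasDerivAt_cos u).const_mul t).exp)
      refine this.congr_deriv ?_
      ring) (Continuous.intervalIntegrable (by fun_prop) _ _)
  simp only [Real.sin_pi, Real.sin_zero, zero_mul, sub_zero] at h3
  have e1 : ∀ u, cos u ^ (1+1) * exp (t * cos u) = (1/t) * (cos u * exp (t * cos u) - t * (sin u^2 * exp (t * cos u))) + (exp (t * cos u) - (1/t) * (cos u * exp (t * cos u))) := by
      intro u; rw [Real.sin_sq]; field_simp; ring
  rw [show (∫ θ in (0:ℝ)..π, cos θ ^ (1+1) * exp (t * cos θ)) = ∫ u in (0:ℝ)..π, ((1/t) * (cos u * exp (t * cos u) - t * (sin u^2 * exp (t * cos u))) + (exp (t * cos u) - (1/t) * (cos u * exp (t * cos u)))) from intervalIntegral.integral_congr (fun u _ => e1 u)]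
  rw [intervalIntegral.integral_add (Continuous.intervalIntegrable (by fun_prop) _ _) (Continuous.intervalIntegrable (by fun_prop) _ _),
    intervalIntegral.integral_sub (Continuous.intervalIntegrable (by fun_prop) _ _) (Continuous.intervalIntegrable (by fun_prop) _ _),
    intervalIntegral.integral_const_mul, h3, intervalIntegral.integral_const_mul, I0, I1]
  ring

lemma I0_nonneg (t : ℝ) : 0 ≤ I0 t := by
  unfold I0
  refine mul_nonneg (by positivity) (intervalIntegral.integral_nonneg pi_pos.le fun u _ => (exp_pos _).le)

lemma I0_le {t : ℝ} (ht : 0 ≤ t) : I0 t ≤ exp t := by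
  have : ∫ θ in (0:ℝ)..π, exp (t * cos θ) ≤ ∫ θ in (0:ℝ)..π, exp t := by
    refine intervalIntegral.integral_mono_on pi_pos.le (Continuous.intervalIntegrable (by fun_prop) _ _) (by simp) fun u _ => ?_
    apply Real.exp_le_exp.2; nlinarith [cos_le_one u]
  rw [intervalIntegral.integral_const, sub_zero, smul_eq_mul] at this
  unfold I0
  rw [one_div, inv_mul_le_iff₀ pi_pos]; exact this

lemma I1_abs_le {t : ℝ} (ht : 0 ≤ t) : |I1 t| ≤ exp t := by
  have : ‖∫ θ in (0:ℝ)..π, cos θ * exp (t * cos θ)‖ ≤ exp t * |π - 0| := by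
    refine intervalIntegral.norm_integral_le_of_norm_le_const fun u _ => ?_
    rw [norm_mul, Real.norm_of_nonneg (exp_pos _).le, Real.norm_eq_abs]
    calc _ ≤ 1 * exp t := by
          gcongr
          · exact abs_cos_le_one u
          · nlinarith [cos_le_one u]
      _ = _ := one_mul _
  rw [sub_zero, abs_of_pos pi_pos] at this
  unfold I1
  rw [abs_mul, abs_of_pos (by positivity : 0 < 1/π), one_div, inv_mul_le_iff₀ pi_pos, mul_comm π]; exact this


noncomputable def ai (t : ℝ) : ℝ := t * I1 t
noncomputable def bk (t : ℝ) : ℝ := -(t * K1 t)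

lemma hd_ai {t : ℝ} (ht : 0 < t) : HasDerivAt ai (t * I0 t) t := by
  refine ((hasDerivAt_id t).mul (hasDerivAt_I1 ht)).congr_deriv ?_
  simp only [id]; field_simp; ring
lemma hd_bk {t : ℝ} (ht : 0 < t) : HasDerivAt bk (t * K0 t) t := by
  refine ((hasDerivAt_id t).mul (hasDerivAt_K1 ht)).neg.congr_deriv ?_
  simp only [id]; field_simp; ring
lemma hd_I {t : ℝ} (ht : 0 < t) : HasDerivAt I0 (ai t / t) t := by
  refine (hasDerivAt_I0 t).congr_deriv ?_
  unfold ai; field_simp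
lemma hd_K {t : ℝ} (ht : 0 < t) : HasDerivAt K0 (bk t / t) t := by
  refine (hasDerivAt_K0 ht).congr_deriv ?_
  unfold bk; field_simp

noncomputable def e0 (t : ℝ) : ℝ := I0 t * K0 t ^ 3
noncomputable def e1 (t : ℝ) : ℝ := ai t * K0 t ^ 3 + 3 * (I0 t * K0 t ^ 2 * bk t)
noncomputable def e2 (t : ℝ) : ℝ := 3 * (ai t * K0 t ^ 2 * bk t) + 3 * (I0 t * K0 t * bk t ^ 2)
noncomputable def e3 (t : ℝ) : ℝ := 3 * (ai t * K0 t * bk t ^ 2) + I0 t * bk t ^ 3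
noncomputable def e4 (t : ℝ) : ℝ := ai t * bk t ^ 3

lemma hd_e0 {t : ℝ} (ht : 0 < t) : HasDerivAt e0 (e1 t / t + t * (0 : ℝ)) t := by
  refine ((hd_I ht).mul ((hd_K ht).pow 3)).congr_deriv ?_
  simp only [e1, Pi.pow_apply]; push_cast; field_simp; ring
lemma hd_e1 {t : ℝ} (ht : 0 < t) : HasDerivAt e1 ((2 * e2 t) / t + t * (4 * e0 t)) t := by
  refine (((hd_ai ht).mul ((hd_K ht).pow 3)).add ((((hd_I ht).mul ((hd_K ht).pow 2)).mul (hd_bk ht)).const_mul 3)).congr_deriv ?_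
  simp only [e2, e0, Pi.pow_apply, Pi.mul_apply]; push_cast; field_simp; ring
lemma hd_e2 {t : ℝ} (ht : 0 < t) : HasDerivAt e2 ((3 * e3 t) / t + t * (3 * e1 t)) t := by
  refine ((((((hd_ai ht).mul ((hd_K ht).pow 2)).mul (hd_bk ht)).const_mul 3)).add ((((hd_I ht).mul (hd_K ht)).mul ((hd_bk ht).pow 2)).const_mul 3)).congr_deriv ?_
  simp only [e3, e1, Pi.pow_apply, Pi.mul_apply]; push_cast; field_simp; ring
lemma hd_e3 {t : ℝ} (ht : 0 < t) : HasDerivAt e3 ((4 * e4 t) / t + t * (2 * e2 t)) t := by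
  refine ((((((hd_ai ht).mul (hd_K ht)).mul ((hd_bk ht).pow 2)).const_mul 3)).add (((hd_I ht).mul ((hd_bk ht).pow 3)))).congr_deriv ?_
  simp only [e4, e2, Pi.pow_apply, Pi.mul_apply]; push_cast; field_simp; ring
lemma hd_e4 {t : ℝ} (ht : 0 < t) : HasDerivAt e4 (0 / t + t * (e3 t)) t := by
  refine ((hd_ai ht).mul ((hd_bk ht).pow 3)).congr_deriv ?_
  simp only [e3, Pi.pow_apply]; push_cast; field_simp; ring

def Bnd (f : ℝ → ℝ) : Prop := ContinuousOn f (Ioi 0) ∧ ∃ C : ℝ, ∀ t, 0 < t → |f t| ≤ C * (t ^ (-(3/8) : ℝ) * exp (-(3/4 * t)))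

lemma Bnd.add {f g : ℝ → ℝ} (hf : Bnd f) (hg : Bnd g) : Bnd (fun t => f t + g t) := by
  obtain ⟨hf, C, hC⟩ := hf
  obtain ⟨hg, D, hD⟩ := hg
  refine ⟨hf.add hg, C + D, fun t ht => ?_⟩
  rw [add_mul]
  exact (abs_add_le _ _).trans (add_le_add (hC t ht) (hD t ht))
lemma Bnd.cmul {f : ℝ → ℝ} (c : ℝ) (hf : Bnd f) : Bnd (fun t => c * f t) := by
  obtain ⟨hf, C, hC⟩ := hf
  refine ⟨continuousOn_const.mul hf, |c| * C, fun t ht => ?_⟩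
  rw [abs_mul, mul_assoc]
  exact mul_le_mul_of_nonneg_left (hC t ht) (abs_nonneg _)
lemma Bnd.zero : Bnd (fun _ => (0:ℝ)) := ⟨continuousOn_const, 0, by simp⟩

lemma bnd_prod {f g h k : ℝ → ℝ} (cf : ContinuousOn f (Ioi 0)) (cg : ContinuousOn g (Ioi 0)) (ch : ContinuousOn h (Ioi 0)) (ck : ContinuousOn k (Ioi 0))
    (bf : ∀ t, 0 < t → |f t| ≤ 8 * exp (9/8*t))
    (bg : ∀ t, 0 < t → |g t| ≤ 128 * t ^ (-(1/8) : ℝ) * exp (-(5*t/8)))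
    (bh : ∀ t, 0 < t → |h t| ≤ 128 * t ^ (-(1/8) : ℝ) * exp (-(5*t/8)))
    (bk : ∀ t, 0 < t → |k t| ≤ 128 * t ^ (-(1/8) : ℝ) * exp (-(5*t/8))) : Bnd (fun t => f t * g t * h t * k t) := by
  refine ⟨((cf.mul cg).mul ch).mul ck, 8 * 128^3, fun t ht => ?_⟩
  rw [abs_mul, abs_mul, abs_mul]
  have e : (8 * 128^3) * (t ^ (-(3/8) : ℝ) * exp (-(3/4 * t))) = (8 * exp (9/8*t)) * (128 * t ^ (-(1/8) : ℝ) * exp (-(5*t/8))) * (128 * t ^ (-(1/8) : ℝ) * exp (-(5*t/8))) * (128 * t ^ (-(1/8) : ℝ) * exp (-(5*t/8))) := by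
    have h1 : t ^ (-(3/8) : ℝ) = t ^ (-(1/8) : ℝ) * t ^ (-(1/8) : ℝ) * t ^ (-(1/8) : ℝ) := by
      rw [← Real.rpow_add ht, ← Real.rpow_add ht]; norm_num
    have h2 : exp (-(3/4 * t)) = exp (9/8*t) * exp (-(5*t/8)) * exp (-(5*t/8)) * exp (-(5*t/8)) := by
      rw [← Real.exp_add, ← Real.exp_add, ← Real.exp_add]; ring_nf
    rw [h1, h2]; ring
  rw [e]
  have := bf t ht
  have := bg t ht
  have := bh t ht
  have := bk t ht
  gcongr

lemma cI : ContinuousOn I0 (Ioi 0) := fun t ht => (hd_I ht).continuousAt.continuousWithinAt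
lemma cK : ContinuousOn K0 (Ioi 0) := fun t ht => (hd_K ht).continuousAt.continuousWithinAt
lemma ca : ContinuousOn ai (Ioi 0) := fun t ht => (hd_ai ht).continuousAt.continuousWithinAt
lemma cb : ContinuousOn bk (Ioi 0) := fun t ht => (hd_bk ht).continuousAt.continuousWithinAt
lemma bI (t : ℝ) (ht : 0 < t) : |I0 t| ≤ 8 * exp (9/8*t) := by
  rw [abs_of_nonneg (I0_nonneg t)]
  have h1 := I0_le ht.le
  have h2 : exp t ≤ exp (9/8*t) := Real.exp_le_exp.2 (by linarith)
  have := exp_pos t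
  linarith
lemma ba (t : ℝ) (ht : 0 < t) : |ai t| ≤ 8 * exp (9/8*t) := by
  unfold ai
  rw [abs_mul, abs_of_pos ht]
  have h1 := I1_abs_le ht.le
  have h2 : t ≤ 8 * exp (t/8) := by have := Real.add_one_le_exp (t/8); linarith
  calc _ ≤ 8 * exp (t/8) * exp t := by gcongr
    _ = _ := by rw [mul_assoc, ← Real.exp_add]; ring_nf
lemma bK (t : ℝ) (ht : 0 < t) : |K0 t| ≤ 128 * t ^ (-(1/8) : ℝ) * exp (-(5*t/8)) := by
  rw [abs_of_nonneg (K0_nonneg t)]; exact K0_bound ht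
lemma bb (t : ℝ) (ht : 0 < t) : |bk t| ≤ 128 * t ^ (-(1/8) : ℝ) * exp (-(5*t/8)) := by
  unfold bk
  rw [abs_neg, abs_of_nonneg (mul_nonneg ht.le (K1_nonneg t))]; exact tK1_bound ht

lemma Bnd.congr {f g : ℝ → ℝ} (hf : Bnd f) (h : ∀ t, g t = f t) : Bnd g := by
  have : g = f := funext h
  rwa [this]

lemma bnd0 : Bnd e0 := (bnd_prod cI cK cK cK bI bK bK bK).congr fun t => by unfold e0; ring
lemma bnd1 : Bnd e1 := ((bnd_prod ca cK cK cK ba bK bK bK).add ((bnd_prod cI cK cK cb bI bK bK bb).cmul 3)).congr fun t => by unfold e1; ring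
lemma bnd2 : Bnd e2 := (((bnd_prod ca cK cK cb ba bK bK bb).cmul 3).add ((bnd_prod cI cK cb cb bI bK bb bb).cmul 3)).congr fun t => by unfold e2; ring
lemma bnd3 : Bnd e3 := (((bnd_prod ca cK cb cb ba bK bb bb).cmul 3).add (bnd_prod cI cb cb cb bI bb bb bb)).congr fun t => by unfold e3; ring
lemma bnd4 : Bnd e4 := (bnd_prod ca cb cb cb ba bb bb bb).congr fun t => by unfold e4; ring

lemma Bnd.int {f : ℝ → ℝ} (hf : Bnd f) (k : ℕ) : IntegrableOn (fun t => t^k * f t) (Ioi 0) := by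
  obtain ⟨hc, C, hC⟩ := hf
  have h := integrableOn_rpow_mul_exp_neg_mul_rpow (s := k - 3/8) (p := 1) (b := 3/4) (by have : (0:ℝ) ≤ k := by positivity
                                                                                          linarith) (by norm_num) (by norm_num)
  refine Integrable.mono' (h.const_mul C) (((continuous_pow k).continuousOn.mul hc).aestronglyMeasurable measurableSet_Ioi) ?_
  refine (ae_restrict_iff' measurableSet_Ioi).2 (Filter.Eventually.of_forall fun t ht => ?_)
  have ht : 0 < t := ht
  rw [norm_mul, Real.norm_of_nonneg (by positivity : 0 ≤ t^k), Real.norm_eq_abs]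
  calc _ ≤ t^k * (C * (t ^ (-(3/8) : ℝ) * exp (-(3/4 * t)))) := by gcongr; exact hC t ht
    _ = _ := by
      rw [sub_eq_add_neg, Real.rpow_add ht, Real.rpow_natCast, Real.rpow_one]; ring_nf

lemma Bnd.lim_top {f : ℝ → ℝ} (hf : Bnd f) (k : ℕ) : Filter.Tendsto (fun t => t^k * f t) Filter.atTop (nhds 0) := by
  obtain ⟨hc, C, hC⟩ := hf
  have h := (tendsto_rpow_mul_exp_neg_mul_atTop_nhds_zero (k - 3/8) (3/4) (by norm_num)).const_mul C
  rw [mul_zero] at h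
  refine squeeze_zero_norm' ?_ h
  filter_upwards [Filter.eventually_gt_atTop 0] with t ht
  rw [norm_mul, Real.norm_of_nonneg (by positivity : 0 ≤ t^k), Real.norm_eq_abs]
  calc _ ≤ t^k * (C * (t ^ (-(3/8) : ℝ) * exp (-(3/4 * t)))) := by gcongr; exact hC t ht
    _ = _ := by
      rw [sub_eq_add_neg, Real.rpow_add ht, Real.rpow_natCast]; ring_nf

lemma tendsto_r58 (C : ℝ) : Filter.Tendsto (fun t : ℝ => C * t ^ (5/8:ℝ)) (nhdsWithin 0 (Ici 0)) (nhds 0) := by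
  have : Continuous (fun t : ℝ => C * t ^ (5/8:ℝ)) := continuous_const.mul (Real.continuous_rpow_const (by norm_num))
  have h := this.tendsto 0
  rw [Real.zero_rpow (by norm_num), mul_zero] at h
  exact h.mono_left nhdsWithin_le_nhds

lemma Bnd.cont0 {f : ℝ → ℝ} (hf : Bnd f) (k : ℕ) (hk : 1 ≤ k) : ContinuousWithinAt (fun t => t^k * f t) (Ici 0) 0 := by
  obtain ⟨hc, C, hC⟩ := hf
  unfold ContinuousWithinAt
  beta_reduce
  rw [zero_pow (by omega), zero_mul]
  refine squeeze_zero_norm' ?_ (tendsto_r58 |C|)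
  have h1 : ∀ᶠ t in nhdsWithin (0:ℝ) (Ici 0), t < 1 := nhdsWithin_le_nhds (Iio_mem_nhds one_pos)
  filter_upwards [h1, self_mem_nhdsWithin] with t ht1 ht0
  rcases eq_or_lt_of_le (show (0:ℝ) ≤ t from ht0) with h | ht
  · rw [← h, zero_pow (by omega), zero_mul, norm_zero]; positivity
  rw [norm_mul, Real.norm_of_nonneg (by positivity : 0 ≤ t^k), Real.norm_eq_abs]
  have h3 : t^k ≤ t := by
    calc t^k ≤ t^1 := pow_le_pow_of_le_one ht.le ht1.le hk
      _ = t := pow_one t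
  have h4 : exp (-(3/4*t)) ≤ 1 := Real.exp_le_one_iff.2 (by linarith)
  calc _ ≤ t * (|C| * (t ^ (-(3/8) : ℝ) * 1)) := by
        refine mul_le_mul h3 ((hC t ht).trans ?_) (abs_nonneg _) ht.le
        gcongr
        exact le_abs_self C
    _ = |C| * (t ^ (1:ℝ) * t ^ (-(3/8) : ℝ)) := by rw [Real.rpow_one]; ring
    _ = _ := by rw [← Real.rpow_add ht]; norm_num

lemma mrec {f g h : ℝ → ℝ} (hf : Bnd f) (hg : Bnd g) (hh : Bnd h)
    (hd : ∀ t, 0 < t → HasDerivAt f (g t / t + t * h t) t) (k : ℕ) (hk : 1 ≤ k) :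
    (k+1) * (∫ t in Ioi (0:ℝ), t^k * f t) + (∫ t in Ioi (0:ℝ), t^k * g t) + (∫ t in Ioi (0:ℝ), t^(k+2) * h t) = 0 := by
  have hi : IntegrableOn (fun t : ℝ => ((k+1) * (t^k * f t) + t^k * g t) + t^(k+2) * h t) (Ioi 0) :=
    (((hf.int k).const_mul _).add (hg.int k)).add (hh.int (k+2))
  have hi2 : IntegrableOn (fun t : ℝ => ((k+1) * (t^k * f t) + t^k * g t)) (Ioi 0) :=
    (((hf.int k).const_mul _).add (hg.int k))
  have := integral_Ioi_of_hasDerivAt_of_tendsto (f := fun t => t^(k+1) * f t) (a := 0) (m := 0)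
    (hf.cont0 (k+1) (by omega)) (fun t ht => by
      have ht : 0 < t := ht
      refine ((hasDerivAt_pow (k+1) t).mul (hd t ht)).congr_deriv (g' := ((k+1) * (t^k * f t) + t^k * g t) + t^(k+2) * h t) ?_
      simp only [Nat.add_sub_cancel]; push_cast; field_simp; ring) hi (hf.lim_top (k+1))
  rw [zero_pow (by omega), zero_mul, sub_zero, integral_add hi2 (hh.int (k+2)), integral_add ((hf.int k).const_mul _) (hg.int k), integral_const_mul] at this
  exact this

lemma m3_one : ∫ t in Ioi (0:ℝ), t^1 * e3 t = 0 := by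
  have h := integral_Ioi_of_hasDerivAt_of_tendsto (f := e4) (f' := fun t => t^1 * e3 t) (a := 0) (m := 0)
    ?_ (fun t ht => by
      have ht : 0 < t := ht
      refine (hd_e4 ht).congr_deriv ?_
      simp) (bnd3.int 1) (by simpa using bnd4.lim_top 0)
  · rw [h]; simp [e4, ai]
  · have hI : Bnd (fun t => (bk t) * bk t * bk t * I1 t) := by
      have c1 : ContinuousOn I1 (Ioi 0) := fun t ht => (hasDerivAt_I1 ht).continuousAt.continuousWithinAt
      refine (bnd_prod c1 cb cb cb (fun t ht => ?_) bb bb bb).congr (fun t => by ring)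
      have h1 := I1_abs_le (le_of_lt ht)
      have h2 : exp t ≤ exp (9/8*t) := Real.exp_le_exp.2 (by linarith)
      have := exp_pos t
      linarith
    have := hI.cont0 1 le_rfl
    have e : e4 = (fun t => t^1 * (bk t * bk t * bk t * I1 t)) := by
      funext t; unfold e4 ai; ring
    rw [e]; exact this

noncomputable def Mo (n : ℕ) : ℝ := ∫ t in Ioi (0:ℝ), t^(2*n+1) * e0 t

lemma Mo_rec (n : ℕ) : ((2*n+2:ℝ))^5 * Mo n - 4 * (2*n+3) * (5*(2*n+3)^2+3) * Mo (n+1) + 64 * (2*n+4) * Mo (n+2) = 0 := by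
  have E1 := mrec bnd0 bnd1 Bnd.zero (fun t => hd_e0)
  have E2 := mrec bnd1 (bnd2.cmul 2) (bnd0.cmul 4) (fun t => hd_e1)
  have E3 := mrec bnd2 (bnd3.cmul 3) (bnd1.cmul 3) (fun t => hd_e2)
  have E4 := mrec bnd3 (bnd4.cmul 4) (bnd2.cmul 2) (fun t => hd_e3)
  have E5 := mrec bnd4 Bnd.zero bnd3 (fun t => hd_e4)
  simp only [mul_left_comm _ (2:ℝ) _, mul_left_comm _ (3:ℝ) _, mul_left_comm _ (4:ℝ) _, integral_const_mul, mul_zero, integral_zero] at E1 E2 E3 E4 E5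
  have a1 := E1 (2*n+1) (by omega)
  have a2 := E2 (2*n+1) (by omega)
  have a3 := E3 (2*n+1) (by omega)
  have a4 := E4 (2*n+1) (by omega)
  have a5 := E5 (2*n+1) (by omega)
  have b1 := E1 (2*n+1+2) (by omega)
  have b2 := E2 (2*n+1+2) (by omega)
  have b3 := E3 (2*n+1+2) (by omega)
  have c1 := E1 (2*n+1+2+2) (by omega)
  unfold Mo
  rw [show 2*(n+1)+1 = 2*n+1+2 by ring, show 2*(n+2)+1 = 2*n+1+2+2 by ring]
  push_cast at *
  set p : ℝ := 2*n+2 with hp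
  linear_combination p^4 * a1 - p^3 * a2 + 2*p^2*a3 - 6*p*a4 + 24 * a5 - 8 * b3 + (6*p+4*(p+2))*b2 - (6*p^2+6*p*(p+2)+4*(p+2)^2)*b1 + 24 * c1

lemma Mo_one : Mo 1 = Mo 0 / 4 := by
  have E1 := mrec bnd0 bnd1 Bnd.zero (fun t => hd_e0)
  have E2 := mrec bnd1 (bnd2.cmul 2) (bnd0.cmul 4) (fun t => hd_e1)
  have E3 := mrec bnd2 (bnd3.cmul 3) (bnd1.cmul 3) (fun t => hd_e2)
  simp only [mul_left_comm _ (2:ℝ) _, mul_left_comm _ (3:ℝ) _, mul_left_comm _ (4:ℝ) _, integral_const_mul, mul_zero, integral_zero] at E1 E2 E3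
  have a1 := E1 1 (by omega)
  have a2 := E2 1 (by omega)
  have a3 := E3 1 (by omega)
  have b1 := E1 (1+2) (by omega)
  have := m3_one
  unfold Mo
  norm_num at *
  rw [this] at a3
  linarith


noncomputable def psS : PowerSeries ℝ := PowerSeries.mk fun n => 1 / (n.factorial : ℝ)^2
noncomputable def th (f : PowerSeries ℝ) : PowerSeries ℝ := PowerSeries.X * PowerSeries.derivative ℝ f

lemma th_mul (f g : PowerSeries ℝ) : th (f * g) = th f * g + f * th g := by
  unfold th; rw [Derivation.leibniz]; simp only [smul_eq_mul]; ring
lemma th_C (c : ℝ) (f : PowerSeries ℝ) : th (PowerSeries.C c * f) = PowerSeries.C c * th f := by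
  rw [th_mul]; simp [th]
lemma coeff_th (n : ℕ) (f : PowerSeries ℝ) : PowerSeries.coeff n (th f) = n * PowerSeries.coeff n f := by
  cases n with
  | zero => simp [th]
  | succ n =>
    unfold th
    rw [PowerSeries.coeff_succ_X_mul, PowerSeries.coeff_derivative]; push_cast; ring
lemma th_th : th (th psS) = PowerSeries.X * psS := by
  ext n
  rw [coeff_th, coeff_th]
  cases n with
  | zero => simp
  | succ n =>
    rw [PowerSeries.coeff_succ_X_mul]
    simp only [psS, PowerSeries.coeff_mk, Nat.factorial_succ]
    push_cast
    have : (n.factorial:ℝ) ≠ 0 := by positivity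
    field_simp

noncomputable def xc (n : ℕ) : ℝ := PowerSeries.coeff n (psS * psS * psS * psS)

open PowerSeries in
lemma xc_rec (n : ℕ) : ((n:ℝ)+2)^5 * xc (n+2) - 2 * (2*n+3) * (5*(n+1)^2 + 5*(n+1) + 2) * xc (n+1) + 64 * (n+1) * xc n = 0 := by
  set S := psS with hS
  set T := th S with hT
  have h2 : th T = PowerSeries.X * S := th_th
  let E0 := S*S*S*S
  let E1 := C (4:ℝ) * (S*S*S*T)
  let E2 := C (6:ℝ) * (S*S*T*T)
  let E3 := C (4:ℝ) * (S*T*T*T)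
  let E4 := T*T*T*T
  have c4 : C (4:ℝ) = 4 := map_ofNat _ 4
  have c6 : C (6:ℝ) = 6 := map_ofNat _ 6
  have t0 : th E0 = E1 := by simp only [E0, E1, th_mul, ← hT, c4]; ring
  have t1 : th E1 = 2 * E2 + 4 * (PowerSeries.X * E0) := by
    simp only [E0, E1, E2, th_C]; simp only [th_mul, ← hT, h2, c4, c6]; ring
  have t2 : th E2 = 3 * E3 + 3 * (PowerSeries.X * E1) := by
    simp only [E3, E1, E2, th_C]; simp only [th_mul, ← hT, h2, c4, c6]; ring
  have t3 : th E3 = 4 * E4 + 2 * (PowerSeries.X * E2) := by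
    simp only [E3, E4, E2, th_C]; simp only [th_mul, ← hT, h2, c4, c6]; ring
  have t4 : th E4 = PowerSeries.X * E3 := by
    simp only [E3, E4]; simp only [th_mul, ← hT, h2, c4, c6]; ring
  have k2 : (2 : PowerSeries ℝ) = C (2:ℝ) := (map_ofNat _ 2).symm
  have k3 : (3 : PowerSeries ℝ) = C (3:ℝ) := (map_ofNat _ 3).symm
  have k4 : (4 : PowerSeries ℝ) = C (4:ℝ) := (map_ofNat _ 4).symm
  rw [k2, k4] at t1
  rw [k3] at t2
  rw [k2, k4] at t3
  have f0 : ∀ n : ℕ, (n:ℝ) * coeff n E0 = coeff n E1 := fun n => by rw [← coeff_th, t0]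
  have f1 : ∀ n : ℕ, ((n:ℝ)+1) * coeff (n+1) E1 = 2 * coeff (n+1) E2 + 4 * coeff n E0 := fun n => by
    have := coeff_th (n+1) E1; rw [t1] at this; simp only [map_add, coeff_C_mul, coeff_succ_X_mul] at this; push_cast at this; linarith
  have f2 : ∀ n : ℕ, ((n:ℝ)+1) * coeff (n+1) E2 = 3 * coeff (n+1) E3 + 3 * coeff n E1 := fun n => by
    have := coeff_th (n+1) E2; rw [t2] at this; simp only [map_add, coeff_C_mul, coeff_succ_X_mul] at this; push_cast at this; linarith
  have f3 : ∀ n : ℕ, ((n:ℝ)+1) * coeff (n+1) E3 = 4 * coeff (n+1) E4 + 2 * coeff n E2 := fun n => by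
    have := coeff_th (n+1) E3; rw [t3] at this; simp only [map_add, coeff_C_mul, coeff_succ_X_mul] at this; push_cast at this; linarith
  have f4 : ∀ n : ℕ, ((n:ℝ)+1) * coeff (n+1) E4 = coeff n E3 := fun n => by
    have := coeff_th (n+1) E4; rw [t4] at this; simp only [map_add, coeff_C_mul, coeff_succ_X_mul] at this; push_cast at this; linarith
  have a0 := f0 (n+1+1)
  have a1 := f1 (n+1)
  have a2 := f2 (n+1)
  have a3 := f3 (n+1)
  have a4 := f4 (n+1)
  have b0 := f0 (n+1)
  have b1 := f1 n
  have b2 := f2 n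
  have d0 := f0 n
  have g : ∀ m, xc m = coeff m E0 := fun m => rfl
  simp only [g]
  push_cast at *
  set N : ℝ := (n:ℝ)+1+1 with hN
  rw [show (n:ℝ)+2 = N by rw [hN]; ring]
  have e : coeff (n+2) E0 = coeff (n+1+1) E0 := rfl
  rw [e]
  set q : ℝ := (n:ℝ)+1 with hq
  have hNq : N = q + 1 := by rw [hN]
  rw [hNq] at *
  have hn : (n:ℝ) = q - 1 := by rw [hq]; ring
  rw [hn] at d0 ⊢
  linear_combination (q+1)^4 * a0 + (q+1)^3 * a1 + 2*(q+1)^2*a2 + 6*(q+1)*a3 + 24*a4 - 8 * b2 - (6*(q+1)+4*q)*b1 - (6*(q+1)^2+6*(q+1)*q+4*q^2)*b0 + 24 * d0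

lemma xc_zero : xc 0 = 1 := by
  simp [xc, PowerSeries.coeff_mul, psS]
lemma xc_one : xc 1 = 4 := by
  simp [xc, PowerSeries.coeff_mul, psS, Finset.antidiagonal, Finset.Nat.antidiagonal_succ]; norm_num

lemma Mo_closed (n : ℕ) : Mo n = Mo 0 * (n.factorial:ℝ)^4 * xc n / 16^n ∧ Mo (n+1) = Mo 0 * ((n+1).factorial:ℝ)^4 * xc (n+1) / 16^(n+1) := by
  induction n with
  | zero => simp [xc_zero, xc_one, Mo_one]; ring
  | succ n ih =>
    refine ⟨ih.2, ?_⟩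
    have h1 := Mo_rec n
    have h2 := xc_rec n
    rw [ih.1, ih.2] at h1
    have e : Mo (n+1+1) = Mo (n+2) := rfl
    have e' : xc (n+1+1) = xc (n+2) := rfl
    rw [e, e']
    have hf : ((n+1+1).factorial:ℝ) = (n+2) * ((n+1) * n.factorial) := by
      rw [Nat.factorial_succ, Nat.factorial_succ]; push_cast; ring
    have hf1 : ((n+1).factorial:ℝ) = ((n+1) * n.factorial) := by
      rw [Nat.factorial_succ]; push_cast; ring
    rw [hf]
    rw [hf1] at h1
    have hF : (n.factorial:ℝ) ≠ 0 := by positivity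
    set F := (n.factorial:ℝ)
    have hn : (n:ℝ) + 2 ≠ 0 := by positivity
    have h16 : (16:ℝ)^n ≠ 0 := by positivity
    rw [pow_succ (16:ℝ)] at h1
    rw [pow_succ (16:ℝ) (n+1), pow_succ (16:ℝ)]
    have : 128 * ((n:ℝ)+2) * (Mo (n+2) - Mo 0 * ((n+2) * ((n+1) * F))^4 * xc (n+2) / (16^n * 16 * 16)) = 0 := by
      linear_combination h1 - Mo 0 * ((n+1)*F)^4 / 16^n / 2 * h2
    have h3 := (mul_eq_zero.1 this).resolve_left (by positivity)
    linarith


noncomputable def cm (m : ℕ) : ℝ := ∫ θ in (0:ℝ)..π, cos θ ^ m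

lemma cm_rec (m : ℕ) : cm (m+2) = (m+1)/(m+2) * cm m := by
  unfold cm; rw [integral_cos_pow]; simp

lemma cm_odd (n : ℕ) : cm (2*n+1) = 0 := by
  induction n with
  | zero => simp [cm]
  | succ n ih => rw [show 2*(n+1)+1 = (2*n+1)+2 by ring, cm_rec, ih, mul_zero]

lemma cm_even (n : ℕ) : cm (2*n) = π * (2*n).factorial / (4^n * (n.factorial:ℝ)^2) := by
  induction n with
  | zero => simp [cm]
  | succ n ih =>
    rw [show 2*(n+1) = 2*n+2 by ring, cm_rec, ih, Nat.factorial_succ (2*n+1), Nat.factorial_succ (2*n), Nat.factorial_succ n]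
    push_cast
    have : (n.factorial:ℝ) ≠ 0 := by positivity
    field_simp
    ring

lemma hasSum_rexp (x : ℝ) : HasSum (fun n : ℕ => x^n / (n.factorial:ℝ)) (exp x) := by
  rw [Real.exp_eq_exp_ℝ]; exact NormedSpace.expSeries_div_hasSum_exp x

lemma I0_hasSum (t : ℝ) : HasSum (fun n => PowerSeries.coeff n psS * (t^2/4)^n) (I0 t) := by
  have h1 : HasSum (fun m : ℕ => ∫ θ in (0:ℝ)..π, (t * cos θ)^m / (m.factorial:ℝ)) (∫ θ in (0:ℝ)..π, exp (t * cos θ)) := by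
    refine intervalIntegral.hasSum_integral_of_dominated_convergence (fun m _ => |t|^m / (m.factorial:ℝ)) ?_ ?_ ?_ ?_ ?_
    · intro n; exact Continuous.aestronglyMeasurable (by fun_prop)
    · intro n
      refine Filter.Eventually.of_forall fun θ _ => ?_
      rw [norm_div, norm_pow, norm_mul, Real.norm_eq_abs, Real.norm_eq_abs, Real.norm_of_nonneg (by positivity : (0:ℝ) ≤ (n.factorial:ℝ))]
      gcongr
      exact mul_le_of_le_one_right (abs_nonneg _) (abs_cos_le_one θ)
    · exact Filter.Eventually.of_forall fun θ _ => (hasSum_rexp |t|).summable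
    · exact intervalIntegrable_const
    · exact Filter.Eventually.of_forall fun θ _ => hasSum_rexp _
  have h2 := h1.mul_left (1/π)
  have h3 : (fun m : ℕ => 1/π * ∫ θ in (0:ℝ)..π, (t * cos θ)^m / (m.factorial:ℝ)) = fun m => 1/π * (t^m / (m.factorial:ℝ) * cm m) := by
    funext m
    rw [cm, ← intervalIntegral.integral_const_mul (t^m / (m.factorial:ℝ))]
    congr 1
    refine intervalIntegral.integral_congr fun θ _ => ?_
    beta_reduce
    rw [mul_pow]; ring
  rw [h3] at h2
  have hinj : Function.Injective (fun n : ℕ => 2 * n) := fun a b h => by simpa using h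
  have h4 := (hinj.hasSum_iff (f := fun m : ℕ => 1/π * (t^m / (m.factorial:ℝ) * cm m)) (a := I0 t) ?_).2 h2
  · convert h4 using 1
    funext n
    simp only [Function.comp, cm_even, psS, PowerSeries.coeff_mk]
    have : (n.factorial:ℝ) ≠ 0 := by positivity
    have h' : ((2*n).factorial:ℝ) ≠ 0 := by positivity
    have := pi_ne_zero
    rw [div_pow, pow_mul]
    field_simp
  · intro m hm
    have : Odd m := by
      by_contra h
      rw [Nat.not_odd_iff_even] at h
      obtain ⟨k, hk⟩ := h
      exact hm ⟨k, by simp only; omega⟩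
    obtain ⟨k, hk⟩ := this
    rw [hk, cm_odd]; simp

def PwSum (f : PowerSeries ℝ) (y a : ℝ) : Prop := (∀ n, 0 ≤ PowerSeries.coeff n f) ∧ HasSum (fun n => PowerSeries.coeff n f * y^n) a

lemma PwSum.mul {f g : PowerSeries ℝ} {y a b : ℝ} (hy : 0 ≤ y) (hf : PwSum f y a) (hg : PwSum g y b) : PwSum (f * g) y (a * b) := by
  obtain ⟨f0, hf⟩ := hf
  obtain ⟨g0, hg⟩ := hg
  refine ⟨fun n => ?_, ?_⟩
  · rw [PowerSeries.coeff_mul]; exact Finset.sum_nonneg fun p _ => mul_nonneg (f0 _) (g0 _)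
  · have sf := hf.summable.norm
    have sg := hg.summable.norm
    have h1 := tsum_mul_tsum_eq_tsum_sum_antidiagonal_of_summable_norm sf sg
    have h2 := (summable_norm_sum_mul_antidiagonal_of_summable_norm sf sg).of_norm
    rw [hf.tsum_eq, hg.tsum_eq] at h1
    rw [h1]
    have h3 := h2.hasSum
    have e : (fun n => PowerSeries.coeff n (f * g) * y^n) = fun n => ∑ kl ∈ Finset.HasAntidiagonal.antidiagonal n,
        (PowerSeries.coeff kl.1) f * y ^ kl.1 * ((PowerSeries.coeff kl.2) g * y ^ kl.2) := ?_
    · rw [e]; exact h3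
    funext n
    rw [PowerSeries.coeff_mul, Finset.sum_mul]
    refine Finset.sum_congr rfl fun p hp => ?_
    rw [← Finset.HasAntidiagonal.mem_antidiagonal.1 hp, pow_add]; ring

lemma psum1 (t : ℝ) : PwSum psS (t^2/4) (I0 t) := ⟨fun n => by simp only [psS, PowerSeries.coeff_mk]; positivity, I0_hasSum t⟩
lemma psum2 (t : ℝ) : PwSum (psS * psS) (t^2/4) (I0 t * I0 t) := (psum1 t).mul (by positivity) (psum1 t)
lemma psum4 (t : ℝ) : PwSum (psS * psS * psS * psS) (t^2/4) (I0 t * I0 t * I0 t * I0 t) :=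
  ((psum2 t).mul (by positivity) (psum1 t)).mul (by positivity) (psum1 t)

lemma coeff_SS (n : ℕ) : PowerSeries.coeff n (psS * psS) = (2*n).factorial / (n.factorial:ℝ)^4 := by
  rw [PowerSeries.coeff_mul, Finset.Nat.sum_antidiagonal_eq_sum_range_succ_mk]
  simp only [psS, PowerSeries.coeff_mk]
  have h := Nat.sum_range_choose_sq n
  have h2 : ((∑ i ∈ Finset.range (n+1), n.choose i ^2 : ℕ):ℝ) = ((2*n).choose n : ℝ) := by rw [h]
  rw [Nat.cast_choose ℝ (by omega : n ≤ 2*n), show 2*n-n = n by omega] at h2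
  have hF : (n.factorial:ℝ) ≠ 0 := by positivity
  have : ((2*n).factorial:ℝ) / (n.factorial:ℝ)^4 = ((2*n).factorial / (n.factorial * n.factorial)) / (n.factorial:ℝ)^2 := by field_simp
  rw [this, ← h2]
  push_cast
  rw [Finset.sum_div]
  refine Finset.sum_congr rfl fun i hi => ?_
  rw [Nat.cast_choose ℝ (by simpa [Nat.lt_succ_iff] using hi)]
  have : (i.factorial:ℝ) ≠ 0 := by positivity
  have : ((n-i).factorial:ℝ) ≠ 0 := by positivity
  field_simp

lemma I0_cont : Continuous I0 := continuous_iff_continuousAt.2 fun t => (hasDerivAt_I0 t).continuousAt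

lemma lint_series {f : PowerSeries ℝ} {F : ℝ → ℝ} (hf : ∀ t, PwSum f (t^2/4) (F t)) {w : ℝ → ℝ} (hw : ∀ t, 0 < t → 0 ≤ w t)
    (hi : ∀ n : ℕ, IntegrableOn (fun t => t^(2*n) * w t) (Ioi 0)) :
    ∫⁻ t in Ioi (0:ℝ), ENNReal.ofReal (F t * w t) = ∑' n, ENNReal.ofReal (PowerSeries.coeff n f / 4^n * ∫ t in Ioi (0:ℝ), t^(2*n) * w t) := by
  have h1 : ∫⁻ t in Ioi (0:ℝ), ENNReal.ofReal (F t * w t) = ∫⁻ t in Ioi (0:ℝ), ∑' n, ENNReal.ofReal (PowerSeries.coeff n f / 4^n * (t^(2*n) * w t)) := by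
    refine setLIntegral_congr_fun measurableSet_Ioi fun t ht => ?_
    have hw := hw t ht
    have hs := (hf t).2.mul_right (w t)
    have f0 := (hf t).1
    have e : (fun n => PowerSeries.coeff n f * (t^2/4)^n * w t) = fun n => PowerSeries.coeff n f / 4^n * (t^(2*n) * w t) := by
      funext n; rw [div_pow, pow_mul]; ring
    rw [e] at hs
    beta_reduce
    rw [← hs.tsum_eq, ENNReal.ofReal_tsum_of_nonneg _ hs.summable]
    intro n
    have := f0 n
    have ht : 0 < t := ht
    positivity
  rw [h1, lintegral_tsum]
  · congr 1; funext n
    rw [← integral_const_mul, ofReal_integral_eq_lintegral_ofReal ((hi n).const_mul _)]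
    refine (ae_restrict_iff' measurableSet_Ioi).2 (Filter.Eventually.of_forall fun t ht => ?_)
    have := (hf t).1 n
    have hw := hw t ht
    have ht : 0 < t := ht
    simp only [Pi.zero_apply]
    positivity
  · intro n
    exact (((hi n).const_mul _).aestronglyMeasurable.aemeasurable).ennreal_ofReal

lemma exp4_int (n : ℕ) : IntegrableOn (fun t : ℝ => t^(2*n) * exp (-(4*t))) (Ioi 0) := by
  have h := integrableOn_rpow_mul_exp_neg_mul_rpow (s := (2*n:ℕ)) (p := 1) (b := 4) (by have : (0:ℝ) ≤ (2*n:ℕ) := by positivity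
                                                                                        linarith) (by norm_num) (by norm_num)
  refine h.congr_fun (fun t ht => ?_) measurableSet_Ioi
  beta_reduce
  rw [Real.rpow_natCast, Real.rpow_one]; ring_nf

lemma exp4_val (n : ℕ) : ∫ t in Ioi (0:ℝ), t^(2*n) * exp (-(4*t)) = (2*n).factorial / (4 * 16^n) := by
  have h := Real.integral_rpow_mul_exp_neg_mul_Ioi (a := ((2*n:ℕ):ℝ) + 1) (r := 4) (by positivity) (by norm_num)
  rw [Real.Gamma_nat_eq_factorial] at h
  simp only [add_sub_cancel_right, Real.rpow_natCast] at h
  rw [h, Real.rpow_add (by norm_num), Real.rpow_natCast, pow_mul]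
  norm_num
  rw [one_div, inv_pow]; field_simp

lemma series_link : ∫ t in Ioi (0:ℝ), I0 t^3 * K0 t^3 * t = 4 * Mo 0 * ∫ t in Ioi (0:ℝ), I0 t^4 * exp (-(4*t)) := by
  have hM0 : 0 ≤ Mo 0 := by
    refine setIntegral_nonneg measurableSet_Ioi fun t ht => ?_
    have ht : 0 < t := ht
    have := I0_nonneg t
    have := K0_nonneg t
    unfold e0; positivity
  have h1 := lint_series psum2 (w := fun t => t * e0 t) (fun t ht => by
    have := I0_nonneg t
    have := K0_nonneg t
    unfold e0; positivity) (fun n => by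
      refine (bnd0.int (2*n+1)).congr (Filter.Eventually.of_forall fun t => ?_)
      ring)
  have h2 := lint_series psum4 (w := fun t => exp (-(4*t))) (fun t ht => (exp_pos _).le) exp4_int
  have h3 : ∀ n, PowerSeries.coeff n (psS * psS) / 4^n * (∫ t in Ioi (0:ℝ), t^(2*n) * (t * e0 t)) = (4 * Mo 0) * (PowerSeries.coeff n (psS * psS * psS * psS) / 4^n * ∫ t in Ioi (0:ℝ), t^(2*n) * exp (-(4*t))) := by
    intro n
    rw [exp4_val, coeff_SS]
    have e : (∫ t in Ioi (0:ℝ), t^(2*n) * (t * e0 t)) = Mo n := by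
      unfold Mo; congr 1; funext t; ring
    rw [e, (Mo_closed n).1, xc]
    have : (n.factorial:ℝ) ≠ 0 := by positivity
    field_simp
  simp only [h3] at h1
  simp only [ENNReal.ofReal_mul (by positivity : 0 ≤ 4 * Mo 0)] at h1
  rw [ENNReal.tsum_mul_left, ← h2] at h1
  have g1 : ∫ t in Ioi (0:ℝ), I0 t^3 * K0 t^3 * t = (∫⁻ t in Ioi (0:ℝ), ENNReal.ofReal (I0 t * I0 t * (t * e0 t))).toReal := by
    rw [integral_eq_lintegral_of_nonneg_ae]
    · congr 2; funext t; unfold e0; ring_nf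
    · refine (ae_restrict_iff' measurableSet_Ioi).2 (Filter.Eventually.of_forall fun t ht => ?_)
      have ht : 0 < t := ht
      have := I0_nonneg t
      have := K0_nonneg t
      simp only [Pi.zero_apply]
      positivity
    · exact (((cI.pow 3).mul (cK.pow 3)).mul continuousOn_id).aestronglyMeasurable measurableSet_Ioi
  have g2 : ∫ t in Ioi (0:ℝ), I0 t^4 * exp (-(4*t)) = (∫⁻ t in Ioi (0:ℝ), ENNReal.ofReal (I0 t * I0 t * I0 t * I0 t * exp (-(4*t)))).toReal := by
    rw [integral_eq_lintegral_of_nonneg_ae]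
    · congr 2; funext t; ring_nf
    · refine (Filter.Eventually.of_forall fun t => ?_)
      have := I0_nonneg t
      simp only [Pi.zero_apply]
      positivity
    · exact ((I0_cont.pow 4).mul (by fun_prop)).aestronglyMeasurable
  rw [g1, g2, h1, ENNReal.toReal_mul, ENNReal.toReal_ofReal (by positivity)]


noncomputable def Jp (t : ℝ) : ℝ := ∫ θ in (0:ℝ)..π, exp (t * cos θ)
lemma Jp_eq (t : ℝ) : Jp t = π * I0 t := by unfold Jp I0; have := pi_ne_zero; field_simp
lemma Jp_cont : Continuous Jp := by
  have : Jp = fun t => π * I0 t := funext Jp_eq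
  rw [this]; exact continuous_const.mul I0_cont
lemma Jp_nonneg (t : ℝ) : 0 ≤ Jp t := by rw [Jp_eq]; exact mul_nonneg pi_pos.le (I0_nonneg t)
lemma Jp_le {t : ℝ} (ht : 0 ≤ t) : Jp t ≤ π * exp t := by
  rw [Jp_eq]; exact mul_le_mul_of_nonneg_left (I0_le ht) pi_pos.le

lemma fub (B : ℝ) (g : ℝ → ℝ) (hg : Continuous g) (g0 : ∀ t, 0 ≤ g t)
    (h : IntegrableOn (fun t => exp (-(t*B)) * (g t * Jp t)) (Ioi 0)) :
    ∫ p in (0:ℝ)..π, ∫ t in Ioi (0:ℝ), exp (-(t*(B - cos p))) * g t = ∫ t in Ioi (0:ℝ), exp (-(t*B)) * (g t * Jp t) := by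
  have hin : ∀ t, ∫ p in Ioc (0:ℝ) π, exp (-(t*(B - cos p))) * g t = exp (-(t*B)) * (g t * Jp t) := by
    intro t
    have e : ∀ p, exp (-(t*(B - cos p))) * g t = (exp (-(t*B)) * g t) * exp (t * cos p) := by
      intro p
      rw [show -(t*(B - cos p)) = -(t*B) + t * cos p by ring, Real.exp_add]; ring
    simp_rw [e]
    rw [integral_const_mul, Jp, intervalIntegral.integral_of_le pi_pos.le]; ring
  rw [intervalIntegral.integral_of_le pi_pos.le, integral_integral_swap]
  · simp_rw [hin]
  · have hc : Continuous (fun z : ℝ × ℝ => exp (-(z.2*(B - cos z.1))) * g z.2) := by fun_prop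
    refine (integrable_prod_iff' (Continuous.aestronglyMeasurable hc)).2 ⟨?_, ?_⟩
    · refine Filter.Eventually.of_forall fun t => ?_
      have : Continuous (fun p : ℝ => exp (-(t*(B - cos p))) * g t) := by fun_prop
      exact (this.integrableOn_Icc (a := 0) (b := π)).mono_set Ioc_subset_Icc_self
    · refine h.congr (Filter.Eventually.of_forall fun t => ?_)
      beta_reduce
      rw [← hin t]
      congr 1; funext p
      exact (Real.norm_of_nonneg (mul_nonneg (exp_pos _).le (g0 t))).symm

lemma Jpow_int (k : ℕ) {B : ℝ} (hB : k < B) : IntegrableOn (fun t => exp (-(t*B)) * Jp t ^ k) (Ioi 0) := by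
  have h := (integrableOn_exp_mul_Ioi (a := (k:ℝ) - B) (by linarith) 0).const_mul (π^k)
  refine Integrable.mono' h (Continuous.aestronglyMeasurable (by have := Jp_cont; fun_prop)) ?_
  refine (ae_restrict_iff' measurableSet_Ioi).2 (Filter.Eventually.of_forall fun t ht => ?_)
  have ht : 0 < t := ht
  rw [Real.norm_of_nonneg (mul_nonneg (exp_pos _).le (pow_nonneg (Jp_nonneg t) k))]
  have hj := Jp_le ht.le
  have hj0 := Jp_nonneg t
  calc _ ≤ exp (-(t*B)) * (π * exp t)^k := by gcongr
    _ = _ := by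
      rw [mul_pow, ← Real.exp_nat_mul, mul_left_comm, ← Real.exp_add]; ring_nf

lemma Jp_bound {t : ℝ} (ht : 0 < t) : Jp t ≤ exp t * (π ^ 2 / sqrt t) := by
  have h1 : Jp t ≤ ∫ θ in (0:ℝ)..π, exp t * exp (-(2*t/π^2) * θ^2) := by
    unfold Jp
    refine intervalIntegral.integral_mono_on pi_pos.le (Continuous.intervalIntegrable (by fun_prop) _ _) (Continuous.intervalIntegrable (by fun_prop) _ _) fun θ hθ => ?_
    rw [← Real.exp_add]
    apply Real.exp_le_exp.2
    have := Real.cos_le_one_sub_mul_cos_sq (x := θ) (by rw [abs_of_nonneg hθ.1]; exact hθ.2)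
    calc t * cos θ ≤ t * (1 - 2/π^2 * θ^2) := by gcongr
      _ = _ := by ring
  refine h1.trans ?_
  rw [intervalIntegral.integral_const_mul]
  gcongr
  have hb : 0 < 2*t/π^2 := by positivity
  rw [intervalIntegral.integral_of_le pi_pos.le]
  calc ∫ θ in Ioc (0:ℝ) π, exp (-(2*t/π^2) * θ^2) ≤ ∫ θ in Ioi (0:ℝ), exp (-(2*t/π^2) * θ^2) :=
        setIntegral_mono_set (integrable_exp_neg_mul_sq hb).integrableOn (Filter.Eventually.of_forall fun θ => (exp_pos _).le) (Filter.Eventually.of_forall fun θ hθ => hθ.1)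
    _ = sqrt (π / (2*t/π^2)) / 2 := integral_gaussian_Ioi _
    _ ≤ sqrt (π / (2*t/π^2)) := by have := Real.sqrt_nonneg (π / (2*t/π^2)); linarith
    _ ≤ sqrt (π^4/t) := by
        apply Real.sqrt_le_sqrt
        rw [div_div_eq_mul_div, div_le_div_iff₀ (by positivity) ht]
        have := Real.pi_gt_three
        nlinarith [pow_pos pi_pos 3, mul_pos (pow_pos pi_pos 3) ht]
    _ = π^2 / sqrt t := by
        rw [Real.sqrt_div (by positivity), show π^4 = (π^2)^2 by ring, Real.sqrt_sq (by positivity)]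

lemma J4_int : IntegrableOn (fun t => exp (-(t*4)) * Jp t ^ 4) (Ioi 0) := by
  have hc : Continuous (fun t => exp (-(t*4)) * Jp t ^ 4) := by have := Jp_cont; fun_prop
  rw [← Ioc_union_Ioi_eq_Ioi (zero_le_one)]
  refine IntegrableOn.union ((hc.integrableOn_Icc (a := 0) (b := 1)).mono_set Ioc_subset_Icc_self) ?_
  have h := (integrableOn_Ioi_rpow_of_lt (a := -2) (c := 1) (by norm_num) one_pos).const_mul (π^8)
  refine Integrable.mono' h hc.aestronglyMeasurable ?_
  refine (ae_restrict_iff' measurableSet_Ioi).2 (Filter.Eventually.of_forall fun t ht => ?_)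
  have ht : 0 < t := lt_trans one_pos ht
  rw [Real.norm_of_nonneg (mul_nonneg (exp_pos _).le (pow_nonneg (Jp_nonneg t) 4))]
  have hj := Jp_bound ht
  have hj0 := Jp_nonneg t
  calc _ ≤ exp (-(t*4)) * (exp t * (π ^ 2 / sqrt t))^4 := by gcongr
    _ = (exp (-(t*4)) * exp t^4) * (π^8 / (sqrt t^2)^2) := by ring
    _ = _ := by
      rw [Real.sq_sqrt ht.le, ← Real.exp_nat_mul, ← Real.exp_add, Real.rpow_neg ht.le]
      have : -(t*4) + ((4:ℕ):ℝ) * t = 0 := by push_cast; ring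
      rw [this, Real.exp_zero, one_mul]
      norm_cast

lemma cos_lt_one' {p : ℝ} (hp : p ∈ Ioc (0:ℝ) π) : cos p < 1 := by
  have := Real.cos_lt_cos_of_nonneg_of_le_pi le_rfl hp.2 hp.1
  rwa [cos_zero] at this

lemma ii_congr {f g : ℝ → ℝ} (h : ∀ p ∈ Ioc (0:ℝ) π, f p = g p) : ∫ p in (0:ℝ)..π, f p = ∫ p in (0:ℝ)..π, g p := by
  refine intervalIntegral.integral_congr_ae (Filter.Eventually.of_forall fun p hp => h p ?_)
  rwa [uIoc_of_le pi_pos.le] at hp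

lemma watson_lhs : (1 / (4 * π^4)) *
      (∫ p1 in (0:ℝ)..π, ∫ p2 in (0:ℝ)..π, ∫ p3 in (0:ℝ)..π, ∫ p4 in (0:ℝ)..π,
        1 / (1 - (1/4) * (cos p1 + cos p2 + cos p3 + cos p4))) = ∫ t in Ioi (0:ℝ), I0 t^4 * exp (-(4*t)) := by
  have key : (∫ p1 in (0:ℝ)..π, ∫ p2 in (0:ℝ)..π, ∫ p3 in (0:ℝ)..π, ∫ p4 in (0:ℝ)..π,
        1 / (1 - (1/4) * (cos p1 + cos p2 + cos p3 + cos p4))) = 4 * ∫ t in Ioi (0:ℝ), exp (-(t*4)) * (Jp t^3 * Jp t) := by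
    have s1 := fub 4 (fun t => Jp t^3) (Jp_cont.pow 3) (fun t => pow_nonneg (Jp_nonneg t) 3) (J4_int.congr (Filter.Eventually.of_forall fun t => by ring))
    rw [← s1, ← intervalIntegral.integral_const_mul]
    refine ii_congr fun p1 h1 => ?_
    have c1 := cos_lt_one' h1
    have s2 := fub (4 - cos p1) (fun t => Jp t^2) (Jp_cont.pow 2) (fun t => pow_nonneg (Jp_nonneg t) 2) ((Jpow_int 3 (B := 4 - cos p1) (by push_cast; linarith)).congr (Filter.Eventually.of_forall fun t => by ring))
    rw [show (∫ t in Ioi (0:ℝ), exp (-(t*(4 - cos p1))) * Jp t^3) = ∫ t in Ioi (0:ℝ), exp (-(t*(4 - cos p1))) * (Jp t^2 * Jp t) by congr 1]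
    rw [← s2, ← intervalIntegral.integral_const_mul]
    refine ii_congr fun p2 h2 => ?_
    have c2 := cos_lt_one' h2
    have s3 := fub (4 - cos p1 - cos p2) Jp Jp_cont Jp_nonneg ((Jpow_int 2 (B := 4 - cos p1 - cos p2) (by push_cast; linarith)).congr (Filter.Eventually.of_forall fun t => by ring))
    rw [show (∫ t in Ioi (0:ℝ), exp (-(t*(4 - cos p1 - cos p2))) * Jp t^2) = ∫ t in Ioi (0:ℝ), exp (-(t*(4 - cos p1 - cos p2))) * (Jp t * Jp t) by congr 1; funext t; ring]
    rw [← s3, ← intervalIntegral.integral_const_mul]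
    refine ii_congr fun p3 h3 => ?_
    have c3 := cos_lt_one' h3
    have s4 := fub (4 - cos p1 - cos p2 - cos p3) (fun _ => 1) continuous_const (fun _ => zero_le_one) ((Jpow_int 1 (B := 4 - cos p1 - cos p2 - cos p3) (by push_cast; linarith)).congr (Filter.Eventually.of_forall fun t => by ring))
    rw [show (∫ t in Ioi (0:ℝ), exp (-(t*(4 - cos p1 - cos p2 - cos p3))) * Jp t) = ∫ t in Ioi (0:ℝ), exp (-(t*(4 - cos p1 - cos p2 - cos p3))) * (1 * Jp t) by congr 1; funext t; ring]
    rw [← s4, ← intervalIntegral.integral_const_mul]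
    refine ii_congr fun p4 h4 => ?_
    have c4 := cos_lt_one' h4
    have h := integral_exp_mul_Ioi (a := -(4 - cos p1 - cos p2 - cos p3 - cos p4)) (by linarith) 0
    rw [show (∫ t in Ioi (0:ℝ), exp (-(t*(4 - cos p1 - cos p2 - cos p3 - cos p4))) * 1) = ∫ t in Ioi (0:ℝ), exp (-(4 - cos p1 - cos p2 - cos p3 - cos p4) * t) by congr 1; funext t; ring_nf]
    rw [h, mul_zero, Real.exp_zero, neg_div_neg_eq, mul_one_div, div_eq_div_iff (by linarith) (by linarith)]
    ring
  rw [key]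
  rw [show (∫ t in Ioi (0:ℝ), exp (-(t*4)) * (Jp t^3 * Jp t)) = ∫ t in Ioi (0:ℝ), π^4 * (I0 t^4 * exp (-(4*t))) by congr 1; funext t; rw [Jp_eq]; ring_nf, integral_const_mul]
  have := pi_ne_zero
  field_simp


noncomputable def Pc (z : ℂ) : ℂ := ∫ s in Ioi (0:ℝ), Complex.exp (Complex.I * z * (sinh s : ℝ))
noncomputable def Cc (z : ℂ) : ℂ := ∫ y in (0:ℝ)..(π/2), Complex.exp (-z * (cos y : ℝ))
noncomputable def Kc (z : ℂ) : ℂ := ∫ u in Ioi (0:ℝ), Complex.exp (-z * (cosh u : ℝ))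
noncomputable def KU (z : ℂ) : ℂ := Pc z - Complex.I * Cc z
noncomputable def LU (z : ℂ) : ℂ := Pc z + Complex.I * Cc (-z)

lemma norm_Pterm (z : ℂ) (s : ℝ) : ‖Complex.exp (Complex.I * z * (sinh s : ℝ))‖ = exp (-(z.im * sinh s)) := by
  rw [Complex.norm_exp]; congr 1
  rw [Complex.re_mul_ofReal]; simp
lemma norm_Kterm (z : ℂ) (u : ℝ) : ‖Complex.exp (-z * (u : ℝ))‖ = exp (-(z.re * u)) := by
  rw [Complex.norm_exp]; congr 1
  rw [Complex.re_mul_ofReal]; simp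

lemma self_le_sinh' {s : ℝ} (hs : 0 ≤ s) : s ≤ sinh s := Real.self_le_sinh_iff.2 hs

lemma int_exp_sinh {d : ℝ} (hd : 0 < d) : IntegrableOn (fun s => exp (-(d * sinh s))) (Ioi 0) := by
  refine Integrable.mono' (integrableOn_exp_mul_Ioi (a := -d) (by linarith) 0) (Continuous.aestronglyMeasurable (by fun_prop)) ?_
  refine (ae_restrict_iff' measurableSet_Ioi).2 (Filter.Eventually.of_forall fun s hs => ?_)
  rw [Real.norm_of_nonneg (exp_pos _).le]
  apply Real.exp_le_exp.2
  have := self_le_sinh' (le_of_lt hs)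
  nlinarith

lemma int_sinh_exp_sinh {d : ℝ} (hd : 0 < d) : IntegrableOn (fun s => sinh s * exp (-(d * sinh s))) (Ioi 0) := by
  refine Integrable.mono' ((int_exp_sinh (d := d/2) (by linarith)).const_mul (2/d)) (Continuous.aestronglyMeasurable (by fun_prop)) ?_
  refine (ae_restrict_iff' measurableSet_Ioi).2 (Filter.Eventually.of_forall fun s hs => ?_)
  have h0 : 0 ≤ sinh s := Real.sinh_nonneg_iff.2 (le_of_lt hs)
  rw [Real.norm_of_nonneg (mul_nonneg h0 (exp_pos _).le)]
  have h1 : sinh s ≤ 2/d * exp (d/2 * sinh s) := by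
    have := Real.add_one_le_exp (d/2 * sinh s)
    rw [div_mul_eq_mul_div, le_div_iff₀ hd]; nlinarith
  calc _ ≤ 2/d * exp (d/2 * sinh s) * exp (-(d * sinh s)) := by gcongr
    _ = _ := by rw [mul_assoc, ← Real.exp_add]; ring_nf

lemma int_Pterm {z : ℂ} (hz : 0 < z.im) : IntegrableOn (fun s : ℝ => Complex.exp (Complex.I * z * (sinh s : ℝ))) (Ioi 0) := by
  refine Integrable.mono' (int_exp_sinh hz) (Continuous.aestronglyMeasurable (by fun_prop)) ?_
  exact Filter.Eventually.of_forall fun s => (norm_Pterm z s).le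

lemma int_Kterm {z : ℂ} (hz : 0 < z.re) : IntegrableOn (fun s : ℝ => Complex.exp (-z * (cosh s : ℝ))) (Ioi 0) := by
  have := integrable_cosh_pow 0 hz
  simp only [pow_zero, one_mul] at this
  refine Integrable.mono' this (Continuous.aestronglyMeasurable (by fun_prop)) ?_
  exact Filter.Eventually.of_forall fun s => (norm_Kterm z _).le

lemma Pc_diff {z : ℂ} (hz : 0 < z.im) : DifferentiableAt ℂ Pc z := by
  have hs : {w : ℂ | z.im/2 < w.im} ∈ nhds z :=
    (isOpen_lt continuous_const Complex.continuous_im).mem_nhds (by simp only [mem_setOf_eq]; linarith)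
  have := (hasDerivAt_integral_of_dominated_loc_of_deriv_le (μ := volume.restrict (Ioi (0:ℝ)))
    (F := fun (w : ℂ) (s : ℝ) => Complex.exp (Complex.I * w * (sinh s : ℝ)))
    (F' := fun (w : ℂ) (s : ℝ) => Complex.I * (sinh s : ℝ) * Complex.exp (Complex.I * w * (sinh s : ℝ)))
    (bound := fun s => sinh s * exp (-((z.im/2) * sinh s))) (x₀ := z) hs ?_ (int_Pterm hz) ?_ ?_ (int_sinh_exp_sinh (by linarith)) ?_).2
  · exact this.differentiableAt
  · exact Filter.Eventually.of_forall fun x => Continuous.aestronglyMeasurable (by fun_prop)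
  · exact Continuous.aestronglyMeasurable (by fun_prop)
  · refine (ae_restrict_iff' measurableSet_Ioi).2 (Filter.Eventually.of_forall fun s hs w hw => ?_)
    have h0 : 0 ≤ sinh s := Real.sinh_nonneg_iff.2 (le_of_lt hs)
    have hw : z.im/2 < w.im := hw
    rw [norm_mul, norm_Pterm, norm_mul, Complex.norm_I, one_mul, Complex.norm_real, Real.norm_of_nonneg h0]
    gcongr
  · refine Filter.Eventually.of_forall fun s w hw => ?_
    have h := (((hasDerivAt_id w).const_mul Complex.I).mul_const ((sinh s : ℝ):ℂ)).cexp
    refine h.congr_deriv ?_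
    simp only [id]; ring

lemma Cc_diff (z : ℂ) : DifferentiableAt ℂ Cc z := by
  have := (intervalIntegral.hasDerivAt_integral_of_dominated_loc_of_deriv_le (μ := volume) (a := 0) (b := π/2)
    (F := fun (w : ℂ) (s : ℝ) => Complex.exp (-w * (cos s : ℝ)))
    (F' := fun (w : ℂ) (s : ℝ) => -(cos s : ℝ) * Complex.exp (-w * (cos s : ℝ)))
    (bound := fun s => exp (‖z‖ + 1)) (x₀ := z) (Metric.ball_mem_nhds z one_pos) ?_ ?_ ?_ ?_ ?_ ?_).2
  · exact this.differentiableAt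
  · exact Filter.Eventually.of_forall fun x => Continuous.aestronglyMeasurable (by fun_prop)
  · exact Continuous.intervalIntegrable (by fun_prop) _ _
  · exact Continuous.aestronglyMeasurable (by fun_prop)
  · refine Filter.Eventually.of_forall fun s _ w hw => ?_
    rw [norm_mul, norm_neg, Complex.norm_real, Real.norm_eq_abs]
    have hw' : ‖w‖ ≤ ‖z‖ + 1 := by
      have : ‖w - z‖ < 1 := by simpa [dist_eq_norm] using hw
      have := norm_sub_norm_le w z; linarith
    calc _ ≤ 1 * exp (‖z‖+1) := by
          refine mul_le_mul (abs_cos_le_one s) ?_ (norm_nonneg _) zero_le_one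
          rw [norm_Kterm]
          apply Real.exp_le_exp.2
          calc -(w.re * cos s) ≤ |w.re * cos s| := neg_le_abs _
            _ ≤ |w.re| * 1 := by rw [abs_mul]; gcongr; exact abs_cos_le_one s
            _ ≤ ‖w‖ := by rw [mul_one]; exact Complex.abs_re_le_norm w
            _ ≤ _ := hw'
      _ = _ := one_mul _
  · exact intervalIntegrable_const
  · refine Filter.Eventually.of_forall fun s _ w hw => ?_
    have h := (((hasDerivAt_id w).neg).mul_const ((cos s : ℝ):ℂ)).cexp
    refine h.congr_deriv ?_
    simp only [id, Pi.neg_apply]; ring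

lemma KU_diff {z : ℂ} (hz : 0 < z.im) : DifferentiableAt ℂ KU z :=
  (Pc_diff hz).sub ((Cc_diff z).const_mul _)
lemma LU_diff {z : ℂ} (hz : 0 < z.im) : DifferentiableAt ℂ LU z :=
  (Pc_diff hz).add (DifferentiableAt.const_mul ((Cc_diff (-z)).comp z differentiableAt_id.neg) _)

lemma conj_KU (y : ℝ) : LU (Complex.I * y) = (starRingEnd ℂ) (KU (Complex.I * y)) := by
  unfold LU KU Pc Cc
  rw [map_sub, map_mul, Complex.conj_I, ← integral_conj, neg_mul, sub_neg_eq_add,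
    intervalIntegral.integral_of_le (by positivity), intervalIntegral.integral_of_le (by positivity), ← integral_conj]
  congr 2
  · funext s
    rw [← Complex.exp_conj]; congr 1
    simp only [map_mul, Complex.conj_I, Complex.conj_ofReal]; ring
  · congr 1; funext s
    rw [← Complex.exp_conj]; congr 1
    simp only [map_mul, map_neg, Complex.conj_I, Complex.conj_ofReal]; ring

lemma cosh_shift (x : ℝ) : Complex.cosh (x + (-(π/2) : ℝ) * Complex.I) = -Complex.I * (sinh x : ℝ) := by
  rw [Complex.cosh_add, Complex.cosh_mul_I, Complex.sinh_mul_I, ← Complex.ofReal_cos, ← Complex.ofReal_sin, Real.cos_neg, Real.sin_neg, Real.cos_pi_div_two, Real.sin_pi_div_two]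
  push_cast; ring

lemma KU_eq {z : ℂ} (hr : 0 < z.re) (hi : 0 < z.im) : KU z = Kc z := by
  have hrect : ∀ T : ℝ, (∫ x in (0:ℝ)..T, Complex.exp (Complex.I * z * (sinh x : ℝ))) - (∫ x in (0:ℝ)..T, Complex.exp (-z * (cosh x : ℝ)))
      + Complex.I * (∫ y in (-(π/2))..0, Complex.exp (-z * Complex.cosh (T + y * Complex.I))) - Complex.I * Cc z = 0 := by
    intro T
    have h := Complex.integral_boundary_rect_eq_zero_of_differentiableOn (fun u => Complex.exp (-z * Complex.cosh u))
      (⟨0, -(π/2)⟩ : ℂ) (⟨T, 0⟩ : ℂ) (Differentiable.differentiableOn (by fun_prop))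
    simp only [smul_eq_mul, cosh_shift] at h
    rw [show Cc z = ∫ y in (-(π/2))..0, Complex.exp (-z * Complex.cosh ((0:ℝ) + y * Complex.I)) from ?_]
    · rw [← h]
      have q1 : (fun x : ℝ => Complex.exp (Complex.I * z * (sinh x : ℝ))) = fun x : ℝ => Complex.exp (-z * (-Complex.I * (sinh x : ℝ))) := by
        funext x; congr 1; ring
      have q2 : (fun x : ℝ => Complex.exp (-z * (cosh x : ℝ))) = fun x : ℝ => Complex.exp (-z * Complex.cosh ((x:ℂ) + ((0:ℝ):ℂ) * Complex.I)) := by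
        funext x; congr 1; simp
      rw [q1, q2]
    · have := intervalIntegral.integral_comp_neg (a := 0) (b := π/2) (fun y : ℝ => Complex.exp (-z * (cos y : ℝ)))
      rw [neg_zero] at this
      unfold Cc
      simp only [Real.cos_neg] at this
      rw [this]
      congr 1; funext y; simp [Complex.cosh_mul_I]
  have l1 : Filter.Tendsto (fun T : ℝ => ∫ x in (0:ℝ)..T, Complex.exp (Complex.I * z * (sinh x : ℝ))) Filter.atTop (nhds (Pc z)) :=
    intervalIntegral_tendsto_integral_Ioi 0 (int_Pterm hi) Filter.tendsto_id
  have l2 : Filter.Tendsto (fun T : ℝ => ∫ x in (0:ℝ)..T, Complex.exp (-z * (cosh x : ℝ))) Filter.atTop (nhds (Kc z)) :=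
    intervalIntegral_tendsto_integral_Ioi 0 (int_Kterm hr) Filter.tendsto_id
  have l3 : Filter.Tendsto (fun T : ℝ => ∫ y in (-(π/2))..0, Complex.exp (-z * Complex.cosh (T + y * Complex.I))) Filter.atTop (nhds 0) := by
    set m := min z.re z.im with hm
    have hm0 : 0 < m := lt_min hr hi
    have hb : Filter.Tendsto (fun T : ℝ => exp (-(m * T)) * |0 - (-(π/2))|) Filter.atTop (nhds 0) := by
      have := (Real.tendsto_exp_neg_atTop_nhds_zero.comp (Filter.tendsto_id.const_mul_atTop hm0)).mul_const |0 - (-(π/2))|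
      rw [zero_mul] at this
      exact this
    refine squeeze_zero_norm' ?_ hb
    filter_upwards [Filter.eventually_ge_atTop 0] with T hT
    refine intervalIntegral.norm_integral_le_of_norm_le_const fun y hy => ?_
    rw [uIoc_of_le (by have := pi_pos; linarith)] at hy
    have hy2 : y ≤ 0 := hy.2
    have hy1 : -(π/2) < y := hy.1
    rw [Complex.norm_exp]
    apply Real.exp_le_exp.2
    have e : Complex.cosh (T + y * Complex.I) = ((cosh T * cos y : ℝ):ℂ) + ((sinh T * sin y : ℝ):ℂ) * Complex.I := by
      rw [Complex.cosh_add, Complex.cosh_mul_I, Complex.sinh_mul_I]; push_cast; ring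
    rw [e]
    have e2 : (-z * (((cosh T * cos y : ℝ):ℂ) + ((sinh T * sin y : ℝ):ℂ) * Complex.I)).re = -(z.re * (cosh T * cos y)) + z.im * (sinh T * sin y) := by
      simp [Complex.mul_re, Complex.add_re, Complex.add_im, -Complex.ofReal_mul]
      ring
    rw [e2]
    have hc : 0 ≤ cos y := Real.cos_nonneg_of_neg_pi_div_two_le_of_le hy1.le (by have := pi_pos; linarith)
    have hsn : sin y ≤ 0 := Real.sin_nonpos_of_nonpos_of_neg_pi_le hy2 (by have := pi_pos; linarith)
    have h1 : 1 ≤ cos y - sin y := by nlinarith [Real.sin_sq_add_cos_sq y, mul_nonneg hc (neg_nonneg.2 hsn)]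
    have hS : T ≤ sinh T := self_le_sinh' hT
    have hC : sinh T ≤ cosh T := (Real.sinh_lt_cosh T).le
    have a1 : m * sinh T * cos y ≤ z.re * (cosh T * cos y) := by
      rw [← mul_assoc]
      gcongr
      exact min_le_left _ _
    have a2 : m * sinh T * (-sin y) ≤ z.im * (sinh T * (-sin y)) := by
      rw [← mul_assoc]
      have h0 : 0 ≤ -sin y := by linarith
      gcongr
      exact min_le_right _ _
    have a3 : m * T ≤ m * sinh T * (cos y - sin y) := by
      calc m * T ≤ m * sinh T := by gcongr
        _ = m * sinh T * 1 := (mul_one _).symm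
        _ ≤ _ := by gcongr; 
    nlinarith
  have l := ((l1.sub l2).add (l3.const_mul Complex.I)).sub_const (Complex.I * Cc z)
  simp only [hrect] at l
  have := tendsto_nhds_unique l tendsto_const_nhds
  unfold KU
  rw [mul_zero, add_zero] at this
  linear_combination this

lemma LU_eq {z : ℂ} (hr : 0 < z.re) (hi : 0 < z.im) : LU z = Kc z + Complex.I * ∫ y in (0:ℝ)..π, Complex.exp (z * (cos y : ℝ)) := by
  rw [← KU_eq hr hi]
  have h1 : Cc z = ∫ y in (π/2)..π, Complex.exp (z * (cos y : ℝ)) := by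
    have := intervalIntegral.integral_comp_sub_left (a := 0) (b := π/2) (fun y : ℝ => Complex.exp (z * (cos y : ℝ))) π
    rw [show π - π/2 = π/2 by ring, sub_zero] at this
    rw [← this]; unfold Cc
    congr 1; funext y; rw [Real.cos_pi_sub]; congr 1; push_cast; ring
  have h2 : Cc (-z) = ∫ y in (0:ℝ)..(π/2), Complex.exp (z * (cos y : ℝ)) := by
    unfold Cc; rw [neg_neg]
  have h3 := intervalIntegral.integral_add_adjacent_intervals (a := 0) (b := π/2) (c := π) (μ := volume) (f := fun y : ℝ => Complex.exp (z * (cos y : ℝ)))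
    (Continuous.intervalIntegrable (by fun_prop) _ _) (Continuous.intervalIntegrable (by fun_prop) _ _)
  rw [← h3, ← h1, ← h2]
  unfold LU KU; ring


lemma vdc_fin {a b : ℝ} (hab : a ≤ b) {φ g φ' g' : ℝ → ℝ} {w : ℂ} (hw : w ≠ 0) (hr : 0 ≤ w.re)
    (hφ : ∀ x ∈ Icc a b, HasDerivAt φ (φ' x) x) (hg : ∀ x ∈ Icc a b, HasDerivAt g (g' x) x)
    (hgφ : ∀ x ∈ Icc a b, g x * φ' x = 1) (hg' : ∀ x ∈ Icc a b, g' x ≤ 0) (hg0 : ∀ x ∈ Icc a b, 0 ≤ g x)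
    (hφ0 : ∀ x ∈ Icc a b, 0 ≤ φ x) (hc : ContinuousOn g' (Icc a b)) :
    ‖∫ x in a..b, Complex.exp (-w * (φ x : ℝ))‖ ≤ 2 * g a / ‖w‖ := by
  have hE : ∀ x ∈ Icc a b, ‖Complex.exp (-w * (φ x : ℝ))‖ ≤ 1 := by
    intro x hx
    rw [norm_Kterm, Real.exp_le_one_iff]
    have := mul_nonneg hr (hφ0 x hx); linarith
  have hu : uIcc a b = Icc a b := uIcc_of_le hab
  have cφ : ContinuousOn φ (Icc a b) := fun x hx => (hφ x hx).continuousAt.continuousWithinAt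
  have cE : ContinuousOn (fun x => Complex.exp (-w * (φ x : ℝ))) (Icc a b) :=
    (continuousOn_const.mul (Complex.continuous_ofReal.comp_continuousOn cφ)).cexp
  have cg : ContinuousOn (fun x => ((g' x : ℝ):ℂ)) (Icc a b) := Complex.continuous_ofReal.comp_continuousOn hc
  have iE : IntervalIntegrable (fun x => Complex.exp (-w * (φ x : ℝ))) volume a b :=
    ContinuousOn.intervalIntegrable (by rwa [hu])
  have ig : IntervalIntegrable (fun x => ((g' x : ℝ):ℂ) * Complex.exp (-w * (φ x : ℝ))) volume a b :=
    ContinuousOn.intervalIntegrable (by rw [hu]; exact cg.mul cE)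
  have igr : IntervalIntegrable g' volume a b := ContinuousOn.intervalIntegrable (by rwa [hu])
  have hF := intervalIntegral.integral_eq_sub_of_hasDerivAt (a := a) (b := b)
    (f := fun x => -((g x : ℝ):ℂ) * Complex.exp (-w * (φ x : ℝ)) / w)
    (f' := fun x => Complex.exp (-w * (φ x : ℝ)) - (1/w) * (((g' x : ℝ):ℂ) * Complex.exp (-w * (φ x : ℝ)))) ?_ (iE.sub (ig.const_mul _))
  · rw [intervalIntegral.integral_sub iE (ig.const_mul _), intervalIntegral.integral_const_mul] at hF
    have hI : ‖∫ x in a..b, ((g' x : ℝ):ℂ) * Complex.exp (-w * (φ x : ℝ))‖ ≤ g a - g b := by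
      calc _ ≤ ∫ x in a..b, -g' x := by
            refine intervalIntegral.norm_integral_le_of_norm_le hab ?_ igr.neg
            refine (ae_of_all _ fun x hx => ?_)
            have hx' : x ∈ Icc a b := ⟨hx.1.le, hx.2⟩
            rw [norm_mul, Complex.norm_real, Real.norm_of_nonpos (hg' x hx')]
            exact mul_le_of_le_one_right (by linarith [hg' x hx']) (hE x hx')
        _ = _ := by
            rw [intervalIntegral.integral_neg, intervalIntegral.integral_eq_sub_of_hasDerivAt (by rw [hu]; exact hg) igr]; ring
    have e : (∫ x in a..b, Complex.exp (-w * (φ x : ℝ))) = (-((g b : ℝ):ℂ) * Complex.exp (-w * (φ b : ℝ)) + ((g a : ℝ):ℂ) * Complex.exp (-w * (φ a : ℝ)) + ∫ x in a..b, ((g' x : ℝ):ℂ) * Complex.exp (-w * (φ x : ℝ))) / w := by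
      linear_combination hF
    rw [e, norm_div]
    have ha : a ∈ Icc a b := ⟨le_rfl, hab⟩
    have hb : b ∈ Icc a b := ⟨hab, le_rfl⟩
    gcongr
    refine (norm_add_le _ _).trans ?_
    refine (add_le_add (norm_add_le _ _) hI).trans ?_
    rw [norm_mul, norm_mul, norm_neg, Complex.norm_real, Complex.norm_real, Real.norm_of_nonneg (hg0 b hb), Real.norm_of_nonneg (hg0 a ha)]
    have := mul_le_of_le_one_right (hg0 a ha) (hE a ha)
    have := mul_le_of_le_one_right (hg0 b hb) (hE b hb)
    linarith
  · rw [hu]; intro x hx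
    have h1 := (hg x hx).ofReal_comp
    have h2 := (((hφ x hx).ofReal_comp).const_mul (-w)).cexp
    refine ((h1.neg.mul h2).div_const w).congr_deriv ?_
    have h3 : ((g x : ℝ):ℂ) * ((φ' x : ℝ):ℂ) = 1 := by exact_mod_cast hgφ x hx
    simp only [Pi.neg_apply]
    field_simp
    linear_combination w * h3

lemma vdc_inf {a : ℝ} {φ g φ' g' : ℝ → ℝ} {w : ℂ} (hw : w ≠ 0) (hr : 0 ≤ w.re)
    (hφ : ∀ x ∈ Ici a, HasDerivAt φ (φ' x) x) (hg : ∀ x ∈ Ici a, HasDerivAt g (g' x) x)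
    (hgφ : ∀ x ∈ Ici a, g x * φ' x = 1) (hg' : ∀ x ∈ Ici a, g' x ≤ 0) (hg0 : ∀ x ∈ Ici a, 0 ≤ g x)
    (hφ0 : ∀ x ∈ Ici a, 0 ≤ φ x) (hc : ContinuousOn g' (Ici a))
    (hi : IntegrableOn (fun x => Complex.exp (-w * (φ x : ℝ))) (Ioi a)) :
    ‖∫ x in Ioi a, Complex.exp (-w * (φ x : ℝ))‖ ≤ 2 * g a / ‖w‖ := by
  refine le_of_tendsto (intervalIntegral_tendsto_integral_Ioi a hi Filter.tendsto_id).norm ?_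
  filter_upwards [Filter.eventually_ge_atTop a] with b hb
  have sub : Icc a b ⊆ Ici a := fun x hx => hx.1
  exact vdc_fin hb hw hr (fun x hx => hφ x (sub hx)) (fun x hx => hg x (sub hx)) (fun x hx => hgφ x (sub hx))
    (fun x hx => hg' x (sub hx)) (fun x hx => hg0 x (sub hx)) (fun x hx => hφ0 x (sub hx)) (hc.mono sub)

lemma Pc_bound {z : ℂ} (hz : 0 < z.im) : ‖Pc z‖ ≤ 2 / ‖z‖ := by
  have hz0 : z ≠ 0 := by rintro rfl; simp at hz
  have h := vdc_inf (a := 0) (φ := sinh) (g := fun x => 1 / cosh x) (φ' := cosh) (g' := fun x => -sinh x / cosh x ^2)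
    (w := -(Complex.I * z)) (by simp [hz0]) (by simp; exact hz.le) (fun x _ => Real.hasDerivAt_sinh x) (fun x _ => ?_)
    (fun x _ => by have := Real.cosh_pos x; field_simp) (fun x hx => ?_) (fun x _ => by have := Real.cosh_pos x; positivity)
    (fun x hx => Real.sinh_nonneg_iff.2 hx) ?_ ?_
  · simpa [Pc] using h
  · have := (Real.hasDerivAt_cosh x).inv (Real.cosh_pos x).ne'
    simp only [one_div]
    exact this
  · have : 0 ≤ sinh x := Real.sinh_nonneg_iff.2 hx
    have := Real.cosh_pos x
    rw [neg_div]; simp only [Left.neg_nonpos_iff]; positivity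
  · exact Continuous.continuousOn (Continuous.div (by fun_prop) (by fun_prop) fun x => pow_ne_zero _ (Real.cosh_pos x).ne')
  · simpa using int_Pterm hz

lemma Kc_bound {z : ℂ} (hz : 0 < z.re) : ‖Complex.exp z * Kc z‖ ≤ 3 / sqrt ‖z‖ := by
  have hz0 : z ≠ 0 := by rintro rfl; simp at hz
  have hn : 0 < ‖z‖ := norm_pos_iff.2 hz0
  have hsq := Real.sqrt_pos.2 hn
  set d := 1 / sqrt ‖z‖ with hd
  have hd0 : 0 < d := by positivity
  have e1 : Complex.exp z * Kc z = ∫ u in Ioi (0:ℝ), Complex.exp (-z * ((cosh u - 1 : ℝ):ℂ)) := by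
    unfold Kc
    rw [← integral_const_mul]
    congr 1; funext u; rw [← Complex.exp_add]; congr 1; push_cast; ring
  have hint : IntegrableOn (fun u : ℝ => Complex.exp (-z * ((cosh u - 1 : ℝ):ℂ))) (Ioi 0) := by
    refine ((int_Kterm hz).const_mul (Complex.exp z)).congr (ae_of_all _ fun u => ?_)
    simp only []; rw [← Complex.exp_add]; congr 1; push_cast; ring
  have hsub : Ioi d ⊆ Ioi 0 := Ioi_subset_Ioi hd0.le
  have e2 := setIntegral_union (Ioc_disjoint_Ioi_same (a := 0) (b := d)) measurableSet_Ioi (hint.mono_set Ioc_subset_Ioi_self) (hint.mono_set hsub)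
  rw [Ioc_union_Ioi_eq_Ioi hd0.le] at e2
  rw [e1, e2]
  have b1 : ‖∫ u in Ioc 0 d, Complex.exp (-z * ((cosh u - 1 : ℝ):ℂ))‖ ≤ d := by
    have := norm_setIntegral_le_of_norm_le_const (μ := volume) (s := Ioc 0 d) (C := 1) (f := fun u : ℝ => Complex.exp (-z * ((cosh u - 1 : ℝ):ℂ))) (by simp) (fun u hu => ?_)
    · simpa [hd0.le] using this
    · rw [norm_Kterm, Real.exp_le_one_iff]
      have := mul_nonneg hz.le (sub_nonneg.2 (Real.one_le_cosh u)); linarith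
  have sp : ∀ x ∈ Ici d, 0 < sinh x := fun x hx => Real.sinh_pos_iff.2 (hd0.trans_le hx)
  have b2 := vdc_inf (a := d) (φ := fun x => cosh x - 1) (g := fun x => 1 / sinh x) (φ' := sinh) (g' := fun x => -cosh x / sinh x ^2)
    (w := z) hz0 hz.le (fun x _ => (Real.hasDerivAt_cosh x).sub_const 1) (fun x hx => ?_)
    (fun x hx => by have := sp x hx; field_simp) (fun x hx => ?_) (fun x hx => by have := sp x hx; positivity)
    (fun x hx => sub_nonneg.2 (Real.one_le_cosh x)) ?_ (hint.mono_set hsub)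
  · refine (norm_add_le _ _).trans ((add_le_add b1 b2).trans ?_)
    have h1 : 1 / sinh d ≤ 1 / d := one_div_le_one_div_of_le hd0 (self_le_sinh' hd0.le)
    calc d + 2 * (1 / sinh d) / ‖z‖ ≤ d + 2 * (1/d) / ‖z‖ := by gcongr
      _ = _ := by
        rw [hd]; field_simp
        rw [Real.sq_sqrt hn.le]; ring
  · have := (Real.hasDerivAt_sinh x).inv (sp x hx).ne'
    simp only [one_div]
    exact this
  · have := sp x hx
    have := Real.cosh_pos x
    rw [neg_div]; simp only [Left.neg_nonpos_iff]; positivity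
  · exact ContinuousOn.div (by fun_prop) (by fun_prop) fun x hx => pow_ne_zero _ (sp x hx).ne'

lemma Jc_bound {z : ℂ} (hz : 0 < z.re) (h1z : 1 ≤ ‖z‖) : ‖Complex.exp (-z) * Cc (-z)‖ ≤ 5 / sqrt ‖z‖ := by
  have hz0 : z ≠ 0 := by rintro rfl; simp at hz
  have hn : 0 < ‖z‖ := norm_pos_iff.2 hz0
  have hsq := Real.sqrt_pos.2 hn
  set d := 1 / sqrt ‖z‖ with hd
  have hd0 : 0 < d := by positivity
  have hd1 : d ≤ 1 := by
    rw [hd, div_le_one hsq]; exact Real.one_le_sqrt.2 h1z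
  have hp := pi_gt_three
  have hp2 := pi_lt_four
  have hd2 : d ≤ π/2 := by linarith
  have e1 : Complex.exp (-z) * Cc (-z) = ∫ u in (0:ℝ)..(π/2), Complex.exp (-z * ((1 - cos u : ℝ):ℂ)) := by
    unfold Cc
    rw [← intervalIntegral.integral_const_mul]
    congr 1; funext u; rw [← Complex.exp_add]; congr 1; push_cast; ring
  have e2 := intervalIntegral.integral_add_adjacent_intervals (a := 0) (b := d) (c := π/2) (μ := volume) (f := fun u : ℝ => Complex.exp (-z * ((1 - cos u : ℝ):ℂ)))
    (Continuous.intervalIntegrable (by fun_prop) _ _) (Continuous.intervalIntegrable (by fun_prop) _ _)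
  rw [e1, ← e2]
  have b1 : ‖∫ u in (0:ℝ)..d, Complex.exp (-z * ((1 - cos u : ℝ):ℂ))‖ ≤ 1 * |d - 0| := by
    refine intervalIntegral.norm_integral_le_of_norm_le_const fun u hu => ?_
    rw [norm_Kterm, Real.exp_le_one_iff]
    have := mul_nonneg hz.le (sub_nonneg.2 (Real.cos_le_one u)); linarith
  rw [one_mul, sub_zero, abs_of_pos hd0] at b1
  have sp : ∀ x ∈ Icc d (π/2), 0 < sin x := fun x hx => Real.sin_pos_of_pos_of_lt_pi (hd0.trans_le hx.1) (by linarith [hx.2])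
  have b2 := vdc_fin (a := d) (b := π/2) hd2 (φ := fun x => 1 - cos x) (g := fun x => 1 / sin x) (φ' := sin) (g' := fun x => -cos x / sin x ^2)
    (w := z) hz0 hz.le (fun x _ => ?_) (fun x hx => ?_)
    (fun x hx => by have := sp x hx; field_simp) (fun x hx => ?_) (fun x hx => by have := sp x hx; positivity)
    (fun x hx => sub_nonneg.2 (Real.cos_le_one x)) ?_ 
  · refine (norm_add_le _ _).trans ((add_le_add b1 b2).trans ?_)
    have hs : d / 2 ≤ sin d := by
      have := Real.mul_le_sin hd0.le hd2
      refine le_trans ?_ this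
      rw [div_eq_inv_mul]
      gcongr
      rw [inv_eq_one_div, div_le_div_iff₀ (by norm_num) (by positivity)]; linarith
    have h1 : 1 / sin d ≤ 1 / (d/2) := one_div_le_one_div_of_le (by linarith) hs
    calc d + 2 * (1 / sin d) / ‖z‖ ≤ d + 2 * (1/(d/2)) / ‖z‖ := by gcongr
      _ = _ := by
        rw [hd]; field_simp
        rw [Real.sq_sqrt hn.le]; ring
  · simpa using (Real.hasDerivAt_cos x).const_sub 1
  · have := (Real.hasDerivAt_sin x).inv (sp x hx).ne'
    simp only [one_div]
    exact this
  · have := sp x hx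
    have : 0 ≤ cos x := Real.cos_nonneg_of_neg_pi_div_two_le_of_le (by linarith [hx.1]) hx.2
    rw [neg_div]; simp only [Left.neg_nonpos_iff]; positivity
  · exact ContinuousOn.div (by fun_prop) (by fun_prop) fun x hx => pow_ne_zero _ (sp x hx).ne'

lemma N_bound {z : ℂ} (hr : 0 < z.re) (hi : 0 < z.im) (h1z : 1 ≤ ‖z‖) : ‖KU z * LU z‖ ≤ 21 / ‖z‖ := by
  have e : KU z * LU z = (Complex.exp z * Kc z) * (Complex.exp (-z) * Pc z + Complex.I * (Complex.exp (-z) * Cc (-z))) := by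
    rw [KU_eq hr hi]; unfold LU
    have : Complex.exp z * Complex.exp (-z) = 1 := by rw [← Complex.exp_add]; simp
    linear_combination (-(Kc z * (Pc z + Complex.I * Cc (-z)))) * this
  have hn : 0 < ‖z‖ := by linarith
  have hsq := Real.sqrt_pos.2 hn
  have hs1 : 1 ≤ sqrt ‖z‖ := Real.one_le_sqrt.2 h1z
  have b1 := Kc_bound hr
  have b2 := Jc_bound hr h1z
  have b3 : ‖Complex.exp (-z) * Pc z‖ ≤ 2 / sqrt ‖z‖ := by
    rw [norm_mul, Complex.norm_exp]
    calc exp (-z).re * ‖Pc z‖ ≤ 1 * (2/‖z‖) := by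
          gcongr
          · rw [Real.exp_le_one_iff]; simpa using hr.le
          · exact Pc_bound hi
      _ ≤ _ := by
        rw [one_mul]
        gcongr
        nlinarith [Real.sq_sqrt hn.le]
  rw [e, norm_mul]
  calc _ ≤ (3 / sqrt ‖z‖) * (2 / sqrt ‖z‖ + 5 / sqrt ‖z‖) := by
        gcongr
        refine (norm_add_le _ _).trans (add_le_add b3 ?_)
        rw [norm_mul, Complex.norm_I, one_mul]; exact b2
    _ = _ := by
      field_simp
      rw [Real.sq_sqrt hn.le]; ring


noncomputable def Hc (z : ℂ) : ℂ := z * (KU z * LU z) ^ 3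

lemma Hc_diff {z : ℂ} (hz : 0 < z.im) : DifferentiableAt ℂ Hc z :=
  differentiableAt_id.mul (((KU_diff hz).mul (LU_diff hz)).pow 3)

lemma Hc_bound {z : ℂ} {T : ℝ} (hT : 1 ≤ T) (hr : 0 < z.re) (hi : 0 < z.im) (h1z : T ≤ ‖z‖) : ‖Hc z‖ ≤ 9261 / T^2 := by
  have h := N_bound hr hi (hT.trans h1z)
  have hn : 0 < ‖z‖ := by linarith
  unfold Hc
  rw [norm_mul, norm_pow]
  calc _ ≤ ‖z‖ * (21/‖z‖)^3 := by gcongr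
    _ = 9261 / ‖z‖^2 := by field_simp; norm_num
    _ ≤ _ := by gcongr

lemma Hc_im {T ε : ℝ} (hT : 1 ≤ T) (hε : 0 < ε) (hε1 : ε ≤ 1) :
    |(∫ x in (0:ℝ)..T, Hc (x + ε * Complex.I)).im| ≤ 18522 / T := by
  have hT0 : 0 < T := by linarith
  have h := Complex.integral_boundary_rect_eq_zero_of_differentiableOn Hc (⟨0, ε⟩ : ℂ) (⟨T, T⟩ : ℂ) (by
    intro z hz
    refine (Hc_diff ?_).differentiableWithinAt
    have h2 := hz.2
    simp only [mem_preimage] at h2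
    rw [uIcc_of_le (by linarith)] at h2
    exact hε.trans_le h2.1)
  simp only [smul_eq_mul] at h
  have hl : (Complex.I * ∫ y in ε..T, Hc ((0:ℝ) + y * Complex.I)).im = 0 := by
    rw [← intervalIntegral.integral_const_mul]
    have : (fun y : ℝ => Complex.I * Hc ((0:ℝ) + y * Complex.I)) = fun y : ℝ => ((-(y * (Complex.normSq (KU (Complex.I * y)))^3) : ℝ):ℂ) := by
      funext y
      unfold Hc
      rw [show ((0:ℝ):ℂ) + y * Complex.I = Complex.I * y by push_cast; ring, conj_KU, Complex.mul_conj]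
      push_cast
      linear_combination (y:ℂ) * (Complex.normSq (KU (Complex.I * y)) : ℂ)^3 * Complex.I_sq
    rw [this, intervalIntegral.integral_ofReal, Complex.ofReal_im]
  have ht : ‖∫ x in (0:ℝ)..T, Hc (x + T * Complex.I)‖ ≤ 9261/T^2 * |T - 0| := by
    refine intervalIntegral.norm_integral_le_of_norm_le_const fun x hx => ?_
    rw [uIoc_of_le hT0.le] at hx
    refine Hc_bound hT (by simpa using hx.1) (by simpa using hT0) ?_
    have := Complex.abs_im_le_norm ((x:ℂ) + T * Complex.I)
    simp [abs_of_pos hT0] at this; exact this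
  have hR : ‖∫ y in ε..T, Hc (T + y * Complex.I)‖ ≤ 9261/T^2 * |T - ε| := by
    refine intervalIntegral.norm_integral_le_of_norm_le_const fun x hx => ?_
    rw [uIoc_of_le (by linarith)] at hx
    refine Hc_bound hT (by simpa using hT0) (by simpa using hε.trans hx.1) ?_
    have := Complex.abs_re_le_norm ((T:ℂ) + x * Complex.I)
    simp [abs_of_pos hT0] at this; exact this
  have e : (∫ x in (0:ℝ)..T, Hc (x + ε * Complex.I)).im = (∫ x in (0:ℝ)..T, Hc (x + T * Complex.I)).im - (Complex.I * ∫ y in ε..T, Hc (T + y * Complex.I)).im := by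
    have := congrArg Complex.im h
    simp only [Complex.sub_im, Complex.add_im, Complex.zero_im] at this
    rw [hl] at this
    linarith
  rw [e]
  have a1 := (Complex.abs_im_le_norm _).trans ht
  have a2 := (Complex.abs_im_le_norm (Complex.I * ∫ y in ε..T, Hc (T + y * Complex.I)))
  rw [norm_mul, Complex.norm_I, one_mul] at a2
  have a2 := a2.trans hR
  refine (abs_sub _ _).trans ?_
  rw [sub_zero, abs_of_pos hT0] at a1
  rw [abs_of_nonneg (by linarith : 0 ≤ T - ε)] at a2
  have a3 : 9261/T^2 * (T - ε) ≤ 9261/T^2 * T := by gcongr; linarith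
  have a4 : 9261/T^2 * T = 9261/T := by field_simp
  have a5 : 18522/T = 9261/T + 9261/T := by ring
  linarith

lemma Jc_eq (z : ℂ) : (∫ y in (0:ℝ)..π, Complex.exp (z * (cos y : ℝ))) = Cc z + Cc (-z) := by
  have h1 : Cc z = ∫ y in (π/2)..π, Complex.exp (z * (cos y : ℝ)) := by
    have := intervalIntegral.integral_comp_sub_left (a := 0) (b := π/2) (fun y : ℝ => Complex.exp (z * (cos y : ℝ))) π
    rw [show π - π/2 = π/2 by ring, sub_zero] at this
    rw [← this]; unfold Cc
    congr 1; funext y; rw [Real.cos_pi_sub]; congr 1; push_cast; ring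
  have h2 : Cc (-z) = ∫ y in (0:ℝ)..(π/2), Complex.exp (z * (cos y : ℝ)) := by
    unfold Cc; rw [neg_neg]
  have h3 := intervalIntegral.integral_add_adjacent_intervals (a := 0) (b := π/2) (c := π) (μ := volume) (f := fun y : ℝ => Complex.exp (z * (cos y : ℝ)))
    (Continuous.intervalIntegrable (by fun_prop) _ _) (Continuous.intervalIntegrable (by fun_prop) _ _)
  rw [← h3, ← h1, ← h2]; ring

lemma Jc_real (x : ℝ) : (∫ y in (0:ℝ)..π, Complex.exp (x * (cos y : ℝ))) = ((π * I0 x : ℝ):ℂ) := by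
  have : π * I0 x = ∫ y in (0:ℝ)..π, exp (x * cos y) := by unfold I0; field_simp
  rw [this, ← intervalIntegral.integral_ofReal]
  congr 1; funext y; push_cast; rfl

lemma Jc_tendsto (x : ℝ) : Filter.Tendsto (fun ε : ℝ => ∫ y in (0:ℝ)..π, Complex.exp ((x + ε * Complex.I) * (cos y : ℝ))) (nhdsWithin 0 (Ioi 0)) (nhds ((π * I0 x : ℝ):ℂ)) := by
  have c : Continuous (fun z => ∫ y in (0:ℝ)..π, Complex.exp (z * (cos y : ℝ))) := by
    simp only [Jc_eq]
    have : Continuous Cc := continuous_iff_continuousAt.2 fun z => (Cc_diff z).continuousAt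
    fun_prop
  have c2 : Continuous (fun ε : ℝ => ∫ y in (0:ℝ)..π, Complex.exp ((x + ε * Complex.I) * (cos y : ℝ))) :=
    c.comp (by fun_prop : Continuous fun ε : ℝ => (x:ℂ) + ε * Complex.I)
  have := (c2.tendsto 0).mono_left (nhdsWithin_le_nhds (s := Ioi 0))
  simp only [Complex.ofReal_zero, zero_mul, add_zero] at this
  rw [Jc_real] at this
  exact this

lemma Kc_norm {z : ℂ} (hz : 0 < z.re) : ‖Kc z‖ ≤ K0 z.re := by
  unfold Kc K0
  refine (norm_integral_le_integral_norm _).trans (le_of_eq ?_)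
  congr 1; funext u; exact norm_Kterm z _

lemma Kc_tendsto {x : ℝ} (hx : 0 < x) : Filter.Tendsto (fun ε : ℝ => Kc (x + ε * Complex.I)) (nhdsWithin 0 (Ioi 0)) (nhds ((K0 x : ℝ):ℂ)) := by
  have e : ((K0 x : ℝ):ℂ) = ∫ u in Ioi (0:ℝ), Complex.exp (-(x:ℂ) * (cosh u : ℝ)) := by
    unfold K0
    rw [← integral_complex_ofReal]
    congr 1; funext u; push_cast; congr 1; ring
  rw [e]
  unfold Kc
  refine tendsto_integral_filter_of_dominated_convergence (fun u => exp (-(x * cosh u))) ?_ ?_ ?_ ?_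
  · exact Filter.Eventually.of_forall fun ε => Continuous.aestronglyMeasurable (by fun_prop)
  · refine Filter.Eventually.of_forall fun ε => Filter.Eventually.of_forall fun u => ?_
    rw [norm_Kterm]; simp
  · have := integrable_cosh_pow 0 hx
    simp only [pow_zero, one_mul] at this; exact this
  · refine Filter.Eventually.of_forall fun u => ?_
    have c : Continuous (fun ε : ℝ => Complex.exp (-(x + ε * Complex.I) * (cosh u : ℝ))) := by fun_prop
    have := (c.tendsto 0).mono_left (nhdsWithin_le_nhds (s := Ioi 0))
    simpa using this

noncomputable def hh (x : ℝ) : ℂ := x * ((K0 x : ℝ) * ((K0 x : ℝ) + Complex.I * ((π * I0 x : ℝ):ℂ)))^3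

lemma Hc_tendsto {T : ℝ} (hT : 1 ≤ T) : Filter.Tendsto (fun ε : ℝ => ∫ x in (0:ℝ)..T, Hc (x + ε * Complex.I)) (nhdsWithin 0 (Ioi 0)) (nhds (∫ x in (0:ℝ)..T, hh x)) := by
  have hT0 : 0 < T := by linarith
  set c := 128 + π * exp T * T^(1/8:ℝ) with hc
  have hH : ∀ x ε : ℝ, 0 < x → 0 < ε → Hc (x + ε * Complex.I) = (x + ε * Complex.I) * (Kc (x + ε * Complex.I) * (Kc (x + ε * Complex.I) + Complex.I * ∫ y in (0:ℝ)..π, Complex.exp ((x + ε * Complex.I) * (cos y : ℝ))))^3 := by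
    intro x ε hx hε
    unfold Hc
    rw [LU_eq (by simpa using hx) (by simpa using hε), KU_eq (by simpa using hx) (by simpa using hε)]
  refine intervalIntegral.tendsto_integral_filter_of_dominated_convergence (fun x => (T+1) * c^6 * x^(-(3/4):ℝ)) ?_ ?_ ?_ ?_
  · filter_upwards [self_mem_nhdsWithin] with ε hε
    refine Continuous.aestronglyMeasurable ?_
    refine continuous_iff_continuousAt.2 fun x => ?_
    exact ContinuousAt.comp (f := fun x : ℝ => (x:ℂ) + ε * Complex.I) (g := Hc) (Hc_diff (by simpa using hε)).continuousAt (by fun_prop)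
  · have : ∀ᶠ ε : ℝ in nhdsWithin 0 (Ioi 0), ε < 1 := nhdsWithin_le_nhds (gt_mem_nhds one_pos)
    filter_upwards [self_mem_nhdsWithin, this] with ε hε hε1
    refine Filter.Eventually.of_forall fun x hx => ?_
    rw [uIoc_of_le hT0.le] at hx
    have hx0 : 0 < x := hx.1
    have hε : 0 < ε := hε
    rw [hH x ε hx0 hε]
    set z : ℂ := x + ε * Complex.I with hz
    have hzr : z.re = x := by simp [hz]
    set k := x^(-(1/8):ℝ) with hk
    have hk0 : 0 < k := rpow_pos_of_pos hx0 _
    have b1 : ‖Kc z‖ ≤ 128 * k := by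
      refine (Kc_norm (by rw [hzr]; exact hx0)).trans ?_
      rw [hzr]
      refine (K0_bound hx0).trans ?_
      exact mul_le_of_le_one_right (by positivity) (Real.exp_le_one_iff.2 (by linarith))
    have b2 : ‖∫ y in (0:ℝ)..π, Complex.exp (z * (cos y : ℝ))‖ ≤ π * exp T := by
      have := intervalIntegral.norm_integral_le_of_norm_le_const (a := 0) (b := π) (C := exp T) (f := fun y : ℝ => Complex.exp (z * (cos y : ℝ))) (fun y _ => ?_)
      · rw [sub_zero, abs_of_pos pi_pos] at this; linarith
      · rw [Complex.norm_exp, Complex.re_mul_ofReal, hzr]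
        apply Real.exp_le_exp.2
        nlinarith [cos_le_one y, hx.2]
    have hTk : 1 ≤ T^(1/8:ℝ) * k := by
      rw [hk, rpow_neg hx0.le, ← div_eq_mul_inv, le_div_iff₀ (rpow_pos_of_pos hx0 _), one_mul]
      exact rpow_le_rpow hx0.le hx.2 (by norm_num)
    have b3 : ‖Kc z + Complex.I * ∫ y in (0:ℝ)..π, Complex.exp (z * (cos y : ℝ))‖ ≤ c * k := by
      refine (norm_add_le _ _).trans ?_
      rw [norm_mul, Complex.norm_I, one_mul]
      have : π * exp T * 1 ≤ π * exp T * (T^(1/8:ℝ) * k) := by gcongr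
      rw [hc]; nlinarith
    have b4 : ‖Kc z‖ ≤ c * k := by
      refine b1.trans ?_
      gcongr; rw [hc]; have : 0 ≤ π * exp T * T^(1/8:ℝ) := by positivity
      linarith
    have b5 : ‖z‖ ≤ T + 1 := by
      refine (norm_add_le _ _).trans ?_
      rw [norm_mul, Complex.norm_I, mul_one, Complex.norm_real, Complex.norm_real, Real.norm_of_nonneg hx0.le, Real.norm_of_nonneg hε.le]
      linarith [hx.2]
    have hk6 : k^6 = x^(-(3/4):ℝ) := by
      rw [hk, ← rpow_natCast, ← rpow_mul hx0.le]; norm_num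
    rw [norm_mul, norm_pow, norm_mul, ← hk6]
    have hck : 0 ≤ c * k := (norm_nonneg _).trans b4
    calc _ ≤ (T+1) * ((c*k)*(c*k))^3 := by gcongr
      _ = _ := by ring
  · exact (intervalIntegral.intervalIntegrable_rpow' (by norm_num)).const_mul _
  · refine Filter.Eventually.of_forall fun x hx => ?_
    rw [uIoc_of_le hT0.le] at hx
    have hx0 : 0 < x := hx.1
    have l0 : Filter.Tendsto (fun ε : ℝ => (x:ℂ) + ε * Complex.I) (nhdsWithin 0 (Ioi 0)) (nhds (x:ℂ)) := by
      have c : Continuous (fun ε : ℝ => (x:ℂ) + ε * Complex.I) := by fun_prop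
      have := (c.tendsto 0).mono_left (nhdsWithin_le_nhds (s := Ioi 0))
      simpa using this
    have l := l0.mul (((Kc_tendsto hx0).mul ((Kc_tendsto hx0).add ((Jc_tendsto x).const_mul Complex.I))).pow 3)
    refine l.congr' ?_
    filter_upwards [self_mem_nhdsWithin] with ε hε
    rw [hH x ε hx0 hε]

noncomputable def g1 (t : ℝ) : ℝ := I0 t * K0 t ^5 * t
noncomputable def g2 (t : ℝ) : ℝ := I0 t ^3 * K0 t ^3 * t

lemma hh_split (x : ℝ) : hh x = ((x * K0 x^3 * (K0 x^3 - 3 * K0 x * (π * I0 x)^2) : ℝ):ℂ) + ((3 * π * g1 x - π^3 * g2 x : ℝ):ℂ) * Complex.I := by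
  unfold hh g1 g2
  have h3 : Complex.I^3 = -Complex.I := by rw [pow_succ, Complex.I_sq]; ring
  push_cast
  ring_nf
  rw [h3, Complex.I_sq]; ring

lemma cg1 : ContinuousOn g1 (Ioi 0) := (cI.mul (cK.pow 5)).mul continuousOn_id
lemma cg2 : ContinuousOn g2 (Ioi 0) := ((cI.pow 3).mul (cK.pow 3)).mul continuousOn_id

lemma g1_int : IntegrableOn g1 (Ioi 0) := by
  have h := integrableOn_rpow_mul_exp_neg_mul_rpow (s := 3/8) (p := 1) (b := 2) (by norm_num) (by norm_num) (by norm_num)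
  refine Integrable.mono' (h.const_mul (8 * 128^5)) (cg1.aestronglyMeasurable measurableSet_Ioi) ?_
  refine (ae_restrict_iff' measurableSet_Ioi).2 (Filter.Eventually.of_forall fun t ht => ?_)
  have ht : 0 < t := ht
  unfold g1
  rw [norm_mul, norm_mul, norm_pow, Real.norm_of_nonneg ht.le]
  have h1 := bI t ht
  have h2 := bK t ht
  calc _ ≤ 8 * exp (9/8*t) * (128 * t ^ (-(1/8) : ℝ) * exp (-(5*t/8)))^5 * t := by gcongr <;> assumption
    _ = 8 * 128^5 * (((t ^ (-(1/8) : ℝ))^5 * t) * (exp (9/8*t) * exp (-(5*t/8))^5)) := by ring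
    _ = _ := by
      have q1 : (t ^ (-(1/8) : ℝ))^5 * t = t^(3/8:ℝ) := by
        rw [← rpow_natCast, ← rpow_mul ht.le]
        nth_rw 2 [← rpow_one t]
        rw [← rpow_add ht]
        norm_num
      have q2 : exp (9/8*t) * exp (-(5*t/8))^5 = exp (-2 * t^(1:ℝ)) := by
        rw [← Real.exp_nat_mul, ← Real.exp_add, rpow_one]; congr 1; push_cast; ring
      rw [q1, q2]

lemma g2_int (T : ℝ) (hT : 0 < T) : IntervalIntegrable g2 volume 0 T := by
  have h : IntervalIntegrable (fun x : ℝ => exp T^3 * 128^3 * T * x^(-(3/8):ℝ)) volume 0 T := (intervalIntegral.intervalIntegrable_rpow' (by norm_num)).const_mul _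
  rw [intervalIntegrable_iff_integrableOn_Ioc_of_le hT.le] at h ⊢
  refine Integrable.mono' h ((cg2.mono Ioc_subset_Ioi_self).aestronglyMeasurable measurableSet_Ioc) ?_
  refine (ae_restrict_iff' measurableSet_Ioc).2 (Filter.Eventually.of_forall fun t ht => ?_)
  have ht0 : 0 < t := ht.1
  have htT : t ≤ T := ht.2
  unfold g2
  rw [norm_mul, norm_mul, norm_pow, norm_pow, Real.norm_of_nonneg ht0.le, Real.norm_of_nonneg (I0_nonneg t), Real.norm_of_nonneg (K0_nonneg t)]
  have h1 : I0 t ≤ exp T := (I0_le ht0.le).trans (Real.exp_le_exp.2 htT)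
  have h2 : K0 t ≤ 128 * t ^ (-(1/8) : ℝ) := (K0_bound ht0).trans (mul_le_of_le_one_right (by positivity) (Real.exp_le_one_iff.2 (by linarith)))
  have := I0_nonneg t
  have := K0_nonneg t
  calc _ ≤ exp T^3 * (128 * t ^ (-(1/8) : ℝ))^3 * T := by gcongr
    _ = exp T^3 * 128^3 * T * (t ^ (-(1/8) : ℝ))^3 := by ring
    _ = _ := by
      have q1 : (t ^ (-(1/8) : ℝ))^3 = t^(-(3/8):ℝ) := by
        rw [← rpow_natCast, ← rpow_mul ht0.le]
        norm_num
      rw [q1]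

lemma sum_fin {T : ℝ} (hT : 1 ≤ T) : |3 * π * (∫ x in (0:ℝ)..T, g1 x) - π^3 * ∫ x in (0:ℝ)..T, g2 x| ≤ 18522 / T := by
  have hT0 : 0 < T := by linarith
  have l := (Complex.continuous_im.tendsto _).comp (Hc_tendsto hT)
  have b : |(∫ x in (0:ℝ)..T, hh x).im| ≤ 18522 / T := by
    refine le_of_tendsto l.abs ?_
    have : ∀ᶠ ε : ℝ in nhdsWithin 0 (Ioi 0), ε < 1 := nhdsWithin_le_nhds (gt_mem_nhds one_pos)
    filter_upwards [self_mem_nhdsWithin, this] with ε hε hε1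
    exact Hc_im hT hε hε1.le
  have i1 : IntervalIntegrable g1 volume 0 T := by
    rw [intervalIntegrable_iff_integrableOn_Ioc_of_le hT0.le]
    exact g1_int.mono_set Ioc_subset_Ioi_self
  have i2 := g2_int T hT0
  have hint : IntervalIntegrable hh volume 0 T := by
    have h : IntervalIntegrable (fun x : ℝ => T * (128 + π * exp T * T^(1/8:ℝ))^6 * x^(-(3/4):ℝ)) volume 0 T := (intervalIntegral.intervalIntegrable_rpow' (by norm_num)).const_mul _
    rw [intervalIntegrable_iff_integrableOn_Ioc_of_le hT0.le] at h ⊢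
    have co : ContinuousOn hh (Ioi 0) := by
      have a1 : ContinuousOn (fun x => ((K0 x : ℝ):ℂ)) (Ioi 0) := Complex.continuous_ofReal.comp_continuousOn cK
      have a2 : ContinuousOn (fun x => ((π * I0 x : ℝ):ℂ)) (Ioi 0) := Complex.continuous_ofReal.comp_continuousOn (continuousOn_const.mul cI)
      exact (Complex.continuous_ofReal.continuousOn).mul ((a1.mul (a1.add (continuousOn_const.mul a2))).pow 3)
    refine Integrable.mono' h ((co.mono Ioc_subset_Ioi_self).aestronglyMeasurable measurableSet_Ioc) ?_
    refine (ae_restrict_iff' measurableSet_Ioc).2 (Filter.Eventually.of_forall fun x hx => ?_)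
    have hx0 : 0 < x := hx.1
    set k := x^(-(1/8):ℝ) with hk
    have hk0 : 0 < k := rpow_pos_of_pos hx0 _
    set c := 128 + π * exp T * T^(1/8:ℝ) with hc
    have hTk : 1 ≤ T^(1/8:ℝ) * k := by
      rw [hk, rpow_neg hx0.le, ← div_eq_mul_inv, le_div_iff₀ (rpow_pos_of_pos hx0 _), one_mul]
      exact rpow_le_rpow hx0.le hx.2 (by norm_num)
    have hp : 0 ≤ π * exp T * T^(1/8:ℝ) := by positivity
    have b1 : K0 x ≤ 128 * k := (K0_bound hx0).trans (mul_le_of_le_one_right (by positivity) (Real.exp_le_one_iff.2 (by linarith)))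
    have b2 : π * I0 x ≤ π * exp T * T^(1/8:ℝ) * k := by
      have h1 : I0 x ≤ exp T := (I0_le hx0.le).trans (Real.exp_le_exp.2 hx.2)
      calc π * I0 x ≤ π * exp T * 1 := by rw [mul_one]; gcongr
        _ ≤ π * exp T * (T^(1/8:ℝ) * k) := by gcongr
        _ = _ := by ring
    have hI := I0_nonneg x
    have hK := K0_nonneg x
    have b3 : ‖((K0 x : ℝ):ℂ) + Complex.I * ((π * I0 x : ℝ):ℂ)‖ ≤ c * k := by
      refine (norm_add_le _ _).trans ?_
      rw [norm_mul, Complex.norm_I, one_mul, Complex.norm_real, Complex.norm_real, Real.norm_of_nonneg hK, Real.norm_of_nonneg (by positivity)]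
      rw [hc]; linarith
    have b4 : K0 x ≤ c * k := by rw [hc]; nlinarith
    have hk6 : k^6 = x^(-(3/4):ℝ) := by
      rw [hk, ← rpow_natCast, ← rpow_mul hx0.le]; norm_num
    unfold hh
    rw [norm_mul, norm_pow, norm_mul, Complex.norm_real, Complex.norm_real, Real.norm_of_nonneg hK, Real.norm_of_nonneg hx0.le, ← hk6]
    have hck : 0 ≤ c * k := hK.trans b4
    calc _ ≤ T * ((c*k)*(c*k))^3 := by gcongr; exact hx.2
      _ = _ := by ring
  have e : (∫ x in (0:ℝ)..T, hh x).im = 3 * π * (∫ x in (0:ℝ)..T, g1 x) - π^3 * ∫ x in (0:ℝ)..T, g2 x := by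
    have := Complex.imCLM.intervalIntegral_comp_comm hint
    simp only [Complex.imCLM_apply] at this
    rw [← this]
    have e2 : (fun x => (hh x).im) = fun x => 3 * π * g1 x - π^3 * g2 x := by
      funext x; rw [hh_split, Complex.add_im, Complex.ofReal_im, Complex.im_ofReal_mul, Complex.I_im]; ring
    rw [e2, intervalIntegral.integral_sub (i1.const_mul _) (i2.const_mul _), intervalIntegral.integral_const_mul, intervalIntegral.integral_const_mul]
  rw [← e]; exact b

lemma sum_rule : 3 * (∫ t in Ioi (0:ℝ), g1 t) = π^2 * ∫ t in Ioi (0:ℝ), g2 t := by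
  have l1 : Filter.Tendsto (fun T : ℝ => ∫ x in (0:ℝ)..T, g1 x) Filter.atTop (nhds (∫ t in Ioi (0:ℝ), g1 t)) :=
    intervalIntegral_tendsto_integral_Ioi 0 g1_int Filter.tendsto_id
  have l0 : Filter.Tendsto (fun T : ℝ => 3 * π * (∫ x in (0:ℝ)..T, g1 x) - π^3 * ∫ x in (0:ℝ)..T, g2 x) Filter.atTop (nhds 0) := by
    refine squeeze_zero_norm' ?_ (Filter.Tendsto.div_atTop (tendsto_const_nhds (x := (18522:ℝ))) Filter.tendsto_id)
    filter_upwards [Filter.eventually_ge_atTop 1] with T hT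
    exact sum_fin hT
  have l2 : Filter.Tendsto (fun T : ℝ => ∫ x in (0:ℝ)..T, g2 x) Filter.atTop (nhds (3 / π^2 * ∫ t in Ioi (0:ℝ), g1 t)) := by
    have := ((l1.const_mul (3*π)).sub l0).const_mul (1/π^3)
    have hp := pi_pos
    have q : 1/π^3 * (3*π * (∫ t in Ioi (0:ℝ), g1 t) - 0) = 3 / π^2 * ∫ t in Ioi (0:ℝ), g1 t := by field_simp; ring
    rw [q] at this
    refine this.congr fun T => ?_
    field_simp; ring
  have i2 : IntegrableOn g2 (Ioi 0) := by
    refine integrableOn_Ioi_of_intervalIntegral_norm_tendsto (3 / π^2 * ∫ t in Ioi (0:ℝ), g1 t) 0 (b := fun T : ℝ => T) (l := Filter.atTop) ?_ Filter.tendsto_id ?_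
    · intro T
      rcases le_or_gt T 0 with h | h
      · rw [Ioc_eq_empty (by linarith)]; simp
      · exact (intervalIntegrable_iff_integrableOn_Ioc_of_le h.le).1 (g2_int T h)
    · refine l2.congr' ?_
      filter_upwards [Filter.eventually_ge_atTop 0] with T hT
      refine intervalIntegral.integral_congr fun x hx => ?_
      rw [uIcc_of_le hT] at hx
      have := I0_nonneg x
      have := K0_nonneg x
      have := hx.1
      exact (Real.norm_of_nonneg (by unfold g2; positivity)).symm
  have l3 : Filter.Tendsto (fun T : ℝ => ∫ x in (0:ℝ)..T, g2 x) Filter.atTop (nhds (∫ t in Ioi (0:ℝ), g2 t)) :=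
    intervalIntegral_tendsto_integral_Ioi 0 i2 Filter.tendsto_id
  rw [tendsto_nhds_unique l3 l2]
  have hp := pi_pos
  field_simp


lemma vdc2 {a b : ℝ} (hab : a ≤ b) {φ g φ' g' : ℝ → ℝ} {w : ℂ} {A B V : ℝ} (hw : w ≠ 0) (hr : 0 ≤ w.re)
    (hφ : ∀ x ∈ Icc a b, HasDerivAt φ (φ' x) x) (hg : ∀ x ∈ Icc a b, HasDerivAt g (g' x) x)
    (hφ0 : ∀ x ∈ Icc a b, 0 ≤ φ x) (hc : ContinuousOn g' (Icc a b)) (hcφ : ContinuousOn φ' (Icc a b))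
    (hA : |g a| ≤ A) (hB : |g b| ≤ B) (hV : ∫ x in a..b, |g' x| ≤ V) :
    ‖∫ x in a..b, ((g x * φ' x : ℝ):ℂ) * Complex.exp (-w * (φ x : ℝ))‖ ≤ (A + B + V) / ‖w‖ := by
  have hE : ∀ x ∈ Icc a b, ‖Complex.exp (-w * (φ x : ℝ))‖ ≤ 1 := by
    intro x hx
    rw [norm_Kterm, Real.exp_le_one_iff]
    have := mul_nonneg hr (hφ0 x hx); linarith
  have hu : uIcc a b = Icc a b := uIcc_of_le hab
  have cφ : ContinuousOn φ (Icc a b) := fun x hx => (hφ x hx).continuousAt.continuousWithinAt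
  have cgg : ContinuousOn g (Icc a b) := fun x hx => (hg x hx).continuousAt.continuousWithinAt
  have cE : ContinuousOn (fun x => Complex.exp (-w * (φ x : ℝ))) (Icc a b) :=
    (continuousOn_const.mul (Complex.continuous_ofReal.comp_continuousOn cφ)).cexp
  have cg : ContinuousOn (fun x => ((g' x : ℝ):ℂ)) (Icc a b) := Complex.continuous_ofReal.comp_continuousOn hc
  have iE : IntervalIntegrable (fun x => ((g x * φ' x : ℝ):ℂ) * Complex.exp (-w * (φ x : ℝ))) volume a b :=
    ContinuousOn.intervalIntegrable (by rw [hu]; exact (Complex.continuous_ofReal.comp_continuousOn (cgg.mul hcφ)).mul cE)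
  have ig : IntervalIntegrable (fun x => ((g' x : ℝ):ℂ) * Complex.exp (-w * (φ x : ℝ))) volume a b :=
    ContinuousOn.intervalIntegrable (by rw [hu]; exact cg.mul cE)
  have igr : IntervalIntegrable g' volume a b := ContinuousOn.intervalIntegrable (by rwa [hu])
  have hF := intervalIntegral.integral_eq_sub_of_hasDerivAt (a := a) (b := b)
    (f := fun x => -((g x : ℝ):ℂ) * Complex.exp (-w * (φ x : ℝ)) / w)
    (f' := fun x => ((g x * φ' x : ℝ):ℂ) * Complex.exp (-w * (φ x : ℝ)) - (1/w) * (((g' x : ℝ):ℂ) * Complex.exp (-w * (φ x : ℝ)))) ?_ (iE.sub (ig.const_mul _))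
  · rw [intervalIntegral.integral_sub iE (ig.const_mul _), intervalIntegral.integral_const_mul] at hF
    have hI : ‖∫ x in a..b, ((g' x : ℝ):ℂ) * Complex.exp (-w * (φ x : ℝ))‖ ≤ V := by
      refine le_trans ?_ hV
      refine intervalIntegral.norm_integral_le_of_norm_le hab ?_ igr.abs
      refine (ae_of_all _ fun x hx => ?_)
      have hx' : x ∈ Icc a b := ⟨hx.1.le, hx.2⟩
      rw [norm_mul, Complex.norm_real, Real.norm_eq_abs]
      exact mul_le_of_le_one_right (abs_nonneg _) (hE x hx')
    have e : (∫ x in a..b, ((g x * φ' x : ℝ):ℂ) * Complex.exp (-w * (φ x : ℝ))) = (-((g b : ℝ):ℂ) * Complex.exp (-w * (φ b : ℝ)) + ((g a : ℝ):ℂ) * Complex.exp (-w * (φ a : ℝ)) + ∫ x in a..b, ((g' x : ℝ):ℂ) * Complex.exp (-w * (φ x : ℝ))) / w := by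
      linear_combination hF
    rw [e, norm_div]
    have ha : a ∈ Icc a b := ⟨le_rfl, hab⟩
    have hb : b ∈ Icc a b := ⟨hab, le_rfl⟩
    gcongr
    refine (norm_add_le _ _).trans ?_
    refine (add_le_add (norm_add_le _ _) hI).trans ?_
    rw [norm_mul, norm_mul, norm_neg, Complex.norm_real, Complex.norm_real, Real.norm_eq_abs, Real.norm_eq_abs]
    have := mul_le_of_le_one_right (abs_nonneg (g a)) (hE a ha)
    have := mul_le_of_le_one_right (abs_nonneg (g b)) (hE b hb)
    linarith
  · rw [hu]; intro x hx
    have h1 := (hg x hx).ofReal_comp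
    have h2 := (((hφ x hx).ofReal_comp).const_mul (-w)).cexp
    refine ((h1.neg.mul h2).div_const w).congr_deriv ?_
    simp only [Pi.neg_apply]
    push_cast
    field_simp
    ring

noncomputable def Rc (z : ℂ) : ℂ := ((π:ℂ) / (2*z)) ^ (1/2:ℂ)

lemma Rc_sq {z : ℂ} (hz : z ≠ 0) : Rc z ^ 2 = π / (2*z) := by
  unfold Rc
  rw [← Complex.cpow_nat_mul]; simp

lemma Rc_norm {z : ℂ} (hz : z ≠ 0) : ‖Rc z‖ ≤ 2 / sqrt ‖z‖ := by
  have hn : 0 < ‖z‖ := norm_pos_iff.2 hz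
  have h : ‖Rc z‖^2 = π / (2 * ‖z‖) := by
    rw [← norm_pow, Rc_sq hz, norm_div, norm_mul]; simp [abs_of_pos pi_pos]
  have hsq := Real.sqrt_pos.2 hn
  refine (abs_le_of_sq_le_sq' ?_ (by positivity)).2
  rw [h, div_pow, Real.sq_sqrt hn.le, div_le_div_iff₀ (by positivity) (by positivity)]
  nlinarith [pi_lt_four]

lemma Rc_gauss {z : ℂ} (hz : 0 < z.re) : Rc z = 2 * ∫ v in Ioi (0:ℝ), Complex.exp (-(2*z) * (v^2 : ℝ)) := by
  have := integral_gaussian_complex_Ioi (b := 2*z) (by simpa using hz)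
  push_cast
  rw [this]; unfold Rc; ring

lemma int_gauss {z : ℂ} (hz : 0 < z.re) : Integrable (fun v : ℝ => Complex.exp (-(2*z) * (v^2 : ℝ))) := by
  have := integrable_cexp_neg_mul_sq (b := 2*z) (by simpa using hz)
  push_cast; exact this

lemma Kc_asymp {z : ℂ} (hz : 0 < z.re) : ‖Complex.exp z * Kc z - Rc z‖ ≤ 2 / ‖z‖ := by
  have hz0 : z ≠ 0 := by rintro rfl; simp at hz
  have hn : 0 < ‖z‖ := norm_pos_iff.2 hz0
  have e1 : Complex.exp z * Kc z = ∫ u in Ioi (0:ℝ), Complex.exp (-z * ((cosh u - 1 : ℝ):ℂ)) := by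
    unfold Kc
    rw [← integral_const_mul]
    congr 1; funext u; rw [← Complex.exp_add]; congr 1; push_cast; ring
  have hint : IntegrableOn (fun u : ℝ => Complex.exp (-z * ((cosh u - 1 : ℝ):ℂ))) (Ioi 0) := by
    refine ((int_Kterm hz).const_mul (Complex.exp z)).congr (ae_of_all _ fun u => ?_)
    simp only []; rw [← Complex.exp_add]; congr 1; push_cast; ring
  have hd : ∀ x : ℝ, HasDerivAt (fun x => sinh (x/2)) (cosh (x/2) / 2) x := fun x => by
    have := (Real.hasDerivAt_sinh (x/2)).comp x ((hasDerivAt_id x).div_const 2)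
    refine this.congr_deriv ?_; ring
  have hdc : ∀ x : ℝ, HasDerivAt (fun x => cosh (x/2)) (sinh (x/2) / 2) x := fun x => by
    have := (Real.hasDerivAt_cosh (x/2)).comp x ((hasDerivAt_id x).div_const 2)
    refine this.congr_deriv ?_; ring
  have hch : ∀ x : ℝ, cosh x - 1 = 2 * sinh (x/2)^2 := fun x => by
    have := Real.cosh_two_mul (x/2)
    rw [show 2 * (x/2) = x by ring, Real.cosh_sq] at this; linarith
  have hsh : ∀ x : ℝ, sinh x = 2 * sinh (x/2) * cosh (x/2) := fun x => by
    have := Real.sinh_two_mul (x/2)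
    rwa [show 2 * (x/2) = x by ring] at this
  have l1 := intervalIntegral_tendsto_integral_Ioi 0 hint (Filter.tendsto_id (α := ℝ))
  have l2 : Filter.Tendsto (fun T : ℝ => 2 * ∫ v in (0:ℝ)..(sinh (T/2)), Complex.exp (-(2*z) * (v^2 : ℝ))) Filter.atTop (nhds (Rc z)) := by
    rw [Rc_gauss hz]
    refine Filter.Tendsto.const_mul _ ?_
    refine intervalIntegral_tendsto_integral_Ioi 0 (int_gauss hz).integrableOn ?_
    refine Filter.tendsto_atTop_mono' _ ?_ (Filter.tendsto_id.atTop_div_const (by norm_num : (0:ℝ) < 2))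
    filter_upwards [Filter.eventually_ge_atTop 0] with T hT
    exact self_le_sinh' (by simp only [id]; linarith)
  rw [← e1] at l1
  refine le_of_tendsto (l1.sub l2).norm ?_
  filter_upwards [Filter.eventually_ge_atTop 0] with T hT
  simp only [id]
  have s1 := intervalIntegral.integral_deriv_smul_comp (a := 0) (b := T) (f := fun x => sinh (x/2)) (f' := fun x => cosh (x/2)/2)
    (g := fun v : ℝ => Complex.exp (-(2*z) * (v^2 : ℝ))) (fun x _ => hd x) (Continuous.continuousOn (by fun_prop)) (by fun_prop)
  rw [zero_div, Real.sinh_zero] at s1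
  have s2 : (2 * ∫ v in (0:ℝ)..(sinh (T/2)), Complex.exp (-(2*z) * (v^2 : ℝ))) = ∫ u in (0:ℝ)..T, ((cosh (u/2) : ℝ):ℂ) * Complex.exp (-z * ((cosh u - 1 : ℝ):ℂ)) := by
    rw [← s1, ← intervalIntegral.integral_const_mul]
    congr 1; funext u
    simp only [Function.comp, Complex.real_smul, hch]
    rw [show -(2*z) * ((sinh (u/2)^2 : ℝ):ℂ) = -z * ((2 * sinh (u/2)^2 : ℝ):ℂ) by push_cast; ring]
    push_cast; ring
  rw [s2, ← intervalIntegral.integral_sub (Continuous.intervalIntegrable (by fun_prop) _ _) (Continuous.intervalIntegrable (by fun_prop) _ _), ← norm_neg, ← intervalIntegral.integral_neg]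
  have cp : ∀ x : ℝ, 1 ≤ cosh (x/2) := fun x => Real.one_le_cosh _
  have cp0 : ∀ x : ℝ, 0 < cosh (x/2) := fun x => Real.cosh_pos _
  have ssq : ∀ x : ℝ, sinh (x/2)^2 = cosh (x/2)^2 - 1 := fun x => by rw [Real.cosh_sq]; ring
  have bb : ∀ x : ℝ, |-(cosh (x/2)^2 - cosh (x/2) - 1) / (4 * cosh (x/2)^2 * (cosh (x/2) + 1))| ≤ 1/2 * exp (-(1/2) * x) := fun x => by
    have h1 := cp x
    have h2 : 1 / cosh (x/2) ≤ 2 * exp (-(1/2)*x) := by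
      rw [div_le_iff₀ (cp0 x)]
      have : exp (x/2) / 2 ≤ cosh (x/2) := by rw [Real.cosh_eq]; have := Real.exp_pos (-(x/2)); linarith
      calc (1:ℝ) = 2 * exp (-(1/2)*x) * (exp (x/2)/2) := by
            have : exp (-(1/2)*x) * exp (x/2) = 1 := by rw [← Real.exp_add]; ring_nf; simp
            linear_combination -this
        _ ≤ _ := by gcongr
    have h3 : |-(cosh (x/2)^2 - cosh (x/2) - 1) / (4 * cosh (x/2)^2 * (cosh (x/2) + 1))| ≤ 1/4 * (1 / cosh (x/2)) := by
      have hD : 0 < 4 * cosh (x/2)^2 * (cosh (x/2) + 1) := by have := cp0 x; positivity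
      rw [abs_div, abs_of_pos hD, div_le_iff₀ hD]
      have : 1/4 * (1 / cosh (x/2)) * (4 * cosh (x/2)^2 * (cosh (x/2) + 1)) = cosh (x/2) * (cosh (x/2) + 1) := by
        have := (cp0 x).ne'
        field_simp
      rw [this, abs_le]
      constructor <;> nlinarith
    linarith
  have gc : Continuous (fun x => -(cosh (x/2)^2 - cosh (x/2) - 1) / (4 * cosh (x/2)^2 * (cosh (x/2) + 1))) :=
    Continuous.div (by fun_prop) (by fun_prop) fun x => by have := cp0 x; positivity
  have v := vdc2 (a := 0) (b := T) hT (φ := fun x => cosh x - 1) (φ' := sinh) (g := fun x => sinh (x/2) / (2 * cosh (x/2) * (cosh (x/2) + 1)))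
    (g' := fun x => -(cosh (x/2)^2 - cosh (x/2) - 1) / (4 * cosh (x/2)^2 * (cosh (x/2) + 1)))
    (w := z) (A := 0) (B := 1) (V := 1) hz0 hz.le (fun x _ => (Real.hasDerivAt_cosh x).sub_const 1) (fun x _ => ?_)
    (fun x _ => sub_nonneg.2 (Real.one_le_cosh x)) gc.continuousOn (Continuous.continuousOn (by fun_prop)) (by simp) ?_ ?_
  · rw [show (0:ℝ) + 1 + 1 = 2 by norm_num] at v
    have e4 : (∫ x in (0:ℝ)..T, -(Complex.exp (-z * ((cosh x - 1 : ℝ):ℂ)) - ((cosh (x/2) : ℝ):ℂ) * Complex.exp (-z * ((cosh x - 1 : ℝ):ℂ)))) = ∫ x in (0:ℝ)..T, ((sinh (x/2) / (2 * cosh (x/2) * (cosh (x/2) + 1)) * sinh x : ℝ):ℂ) * Complex.exp (-z * ((cosh x - 1 : ℝ):ℂ)) := by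
      refine intervalIntegral.integral_congr fun x hx => ?_
      have : cosh (x/2) - 1 = sinh (x/2) / (2 * cosh (x/2) * (cosh (x/2) + 1)) * sinh x := by
        rw [hsh x]
        have h1 := cp0 x
        have h2 := ssq x
        generalize sinh (x/2) = s at *
        generalize cosh (x/2) = c at *
        field_simp
        rw [h2]; ring
      beta_reduce
      rw [← this]; push_cast; ring
    rw [e4]; exact v
  · have h := (hd x).div (((hdc x).const_mul 2).mul ((hdc x).add_const 1)) (by simp only [Pi.mul_apply]; have := cp0 x; positivity)
    refine h.congr_deriv ?_
    simp only [Pi.mul_apply]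
    have h1 := cp0 x
    have h2 := ssq x
    generalize sinh (x/2) = s at *
    generalize cosh (x/2) = c at *
    field_simp
    ring_nf
    rw [h2]; ring
  · have h1 := cp T
    have h2 : 0 ≤ sinh (T/2) := Real.sinh_nonneg_iff.2 (by linarith)
    have h3 := (Real.sinh_lt_cosh (T/2)).le
    rw [abs_of_nonneg (by have := cp0 T; positivity), div_le_one (by have := cp0 T; positivity)]
    nlinarith
  · calc (∫ x in (0:ℝ)..T, |-(cosh (x/2)^2 - cosh (x/2) - 1) / (4 * cosh (x/2)^2 * (cosh (x/2) + 1))|) ≤ ∫ x in (0:ℝ)..T, 1/2 * exp (-(1/2) * x) :=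
          intervalIntegral.integral_mono_on hT (gc.abs.intervalIntegrable _ _) (Continuous.intervalIntegrable (by fun_prop) _ _) fun x _ => bb x
      _ = 1 - exp (-(1/2)*T) := by
          rw [intervalIntegral.integral_eq_sub_of_hasDerivAt (f := fun x => -exp (-(1/2)*x)) (fun x _ => ?_) (Continuous.intervalIntegrable (by fun_prop) _ _)]
          · simp; ring
          · refine (((hasDerivAt_id x).const_mul (-(1/2))).exp.neg).congr_deriv ?_
            simp only [id]; ring
      _ ≤ 1 := by have := Real.exp_pos (-(1/2)*T); linarith

lemma Jc_asymp {z : ℂ} (hz : 0 < z.re) : ‖Complex.exp (-z) * Cc (-z) - Rc z‖ ≤ 3 / ‖z‖ := by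
  have hz0 : z ≠ 0 := by rintro rfl; simp at hz
  have hn : 0 < ‖z‖ := norm_pos_iff.2 hz0
  have hp := pi_gt_three
  have e1 : Complex.exp (-z) * Cc (-z) = ∫ u in (0:ℝ)..(π/2), Complex.exp (-z * ((1 - cos u : ℝ):ℂ)) := by
    unfold Cc
    rw [← intervalIntegral.integral_const_mul]
    congr 1; funext u; rw [← Complex.exp_add]; congr 1; push_cast; ring
  have hd : ∀ x : ℝ, HasDerivAt (fun x => sin (x/2)) (cos (x/2) / 2) x := fun x => by
    have := (Real.hasDerivAt_sin (x/2)).comp x ((hasDerivAt_id x).div_const 2)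
    refine this.congr_deriv ?_; ring
  have hdc : ∀ x : ℝ, HasDerivAt (fun x => cos (x/2)) (-sin (x/2) / 2) x := fun x => by
    have := (Real.hasDerivAt_cos (x/2)).comp x ((hasDerivAt_id x).div_const 2)
    refine this.congr_deriv ?_; ring
  have hch : ∀ x : ℝ, 1 - cos x = 2 * sin (x/2)^2 := fun x => by
    have := Real.cos_two_mul (x/2)
    rw [show 2 * (x/2) = x by ring, Real.cos_sq'] at this; linarith
  have hsh : ∀ x : ℝ, sin x = 2 * sin (x/2) * cos (x/2) := fun x => by
    have := Real.sin_two_mul (x/2)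
    rwa [show 2 * (x/2) = x by ring] at this
  have s1 := intervalIntegral.integral_deriv_smul_comp (a := 0) (b := π/2) (f := fun x => sin (x/2)) (f' := fun x => cos (x/2)/2)
    (g := fun v : ℝ => Complex.exp (-(2*z) * (v^2 : ℝ))) (fun x _ => hd x) (Continuous.continuousOn (by fun_prop)) (by fun_prop)
  rw [zero_div, Real.sin_zero] at s1
  have s2 : (2 * ∫ v in (0:ℝ)..(sin (π/2/2)), Complex.exp (-(2*z) * (v^2 : ℝ))) = ∫ u in (0:ℝ)..(π/2), ((cos (u/2) : ℝ):ℂ) * Complex.exp (-z * ((1 - cos u : ℝ):ℂ)) := by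
    rw [← s1, ← intervalIntegral.integral_const_mul]
    congr 1; funext u
    simp only [Function.comp, Complex.real_smul, hch]
    rw [show -(2*z) * ((sin (u/2)^2 : ℝ):ℂ) = -z * ((2 * sin (u/2)^2 : ℝ):ℂ) by push_cast; ring]
    push_cast; ring
  set s0 := sin (π/2/2) with hs0
  have hs0h : 1/2 ≤ s0 := by
    rw [hs0, show π/2/2 = π/4 by ring, Real.sin_pi_div_four]
    have : 1 ≤ sqrt 2 := Real.one_le_sqrt.2 (by norm_num)
    linarith
  have hs0p : 0 < s0 := by linarith
  have tail : ‖∫ v in Ioi s0, Complex.exp (-(2*z) * (v^2 : ℝ))‖ ≤ 1 / ‖z‖ := by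
    have v := vdc_inf (a := s0) (φ := fun x => x^2) (g := fun x => 1/(2*x)) (φ' := fun x => 2*x) (g' := fun x => -1/(2*x^2)) (w := 2*z) (by simpa using hz0) (by simpa using hz.le)
      (fun x _ => by simpa using hasDerivAt_pow 2 x) (fun x hx => ?_) (fun x hx => ?_) (fun x hx => ?_) (fun x hx => ?_) (fun x _ => sq_nonneg x) ?_ (int_gauss hz).integrableOn
    · refine v.trans ?_
      rw [norm_mul, Complex.norm_ofNat]
      rw [div_le_div_iff₀ (by positivity) hn]
      have : 2 * (1/(2*s0)) ≤ 2 := by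
        rw [show 2 * (1/(2*s0)) = 1/s0 by field_simp, div_le_iff₀ hs0p]; linarith
      nlinarith
    · have hx0 : 0 < x := hs0p.trans_le hx
      have := ((hasDerivAt_id x).const_mul 2).inv (by simp; exact hx0.ne')
      simp only [one_div]
      refine this.congr_deriv ?_
      simp only [id]; field_simp
    · have hx0 : 0 < x := hs0p.trans_le hx
      field_simp
    · have hx0 : 0 < x := hs0p.trans_le hx
      rw [neg_div]; simp only [Left.neg_nonpos_iff]; positivity
    · have hx0 : 0 < x := hs0p.trans_le hx
      positivity
    · exact ContinuousOn.div (by fun_prop) (by fun_prop) fun x hx => by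
        have hx0 : 0 < x := hs0p.trans_le hx
        positivity
  have e3 : Rc z = (2 * ∫ v in (0:ℝ)..s0, Complex.exp (-(2*z) * (v^2 : ℝ))) + 2 * ∫ v in Ioi s0, Complex.exp (-(2*z) * (v^2 : ℝ)) := by
    rw [Rc_gauss hz, ← mul_add, intervalIntegral.integral_of_le hs0p.le]
    rw [← setIntegral_union Ioc_disjoint_Ioi_same measurableSet_Ioi (int_gauss hz).integrableOn (int_gauss hz).integrableOn, Ioc_union_Ioi_eq_Ioi hs0p.le]
  rw [e1, e3, s2, ← sub_sub, ← intervalIntegral.integral_sub (Continuous.intervalIntegrable (by fun_prop) _ _) (Continuous.intervalIntegrable (by fun_prop) _ _)]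
  have cp0 : ∀ x ∈ Icc 0 (π/2), 0 < cos (x/2) := fun x hx => Real.cos_pos_of_mem_Ioo ⟨by linarith [hx.1], by linarith [hx.2]⟩
  have ssq : ∀ x : ℝ, sin (x/2)^2 = 1 - cos (x/2)^2 := fun x => Real.sin_sq _
  have gd : ∀ x ∈ Icc 0 (π/2), HasDerivAt (fun x => sin (x/2) / (2 * cos (x/2) * (cos (x/2) + 1))) ((1 + 2 * cos (x/2) - cos (x/2)^3) / (4 * cos (x/2)^2 * (cos (x/2) + 1)^2)) x := by
    intro x hx
    have h := (hd x).div (((hdc x).const_mul 2).mul ((hdc x).add_const 1)) (by simp only [Pi.mul_apply]; have := cp0 x hx; positivity)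
    refine h.congr_deriv ?_
    simp only [Pi.mul_apply]
    have h1 := cp0 x hx
    have h2 := ssq x
    generalize sin (x/2) = s at *
    generalize cos (x/2) = c at *
    field_simp
    ring_nf
    rw [h2]; ring
  have gc : ContinuousOn (fun x => (1 + 2 * cos (x/2) - cos (x/2)^3) / (4 * cos (x/2)^2 * (cos (x/2) + 1)^2)) (Icc 0 (π/2)) :=
    ContinuousOn.div (by fun_prop) (by fun_prop) fun x hx => by have := cp0 x hx; positivity
  have gp : ∀ x ∈ Icc 0 (π/2), 0 ≤ (1 + 2 * cos (x/2) - cos (x/2)^3) / (4 * cos (x/2)^2 * (cos (x/2) + 1)^2) := by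
    intro x hx
    have h1 := cp0 x hx
    have h2 := cos_le_one (x/2)
    have h3 : cos (x/2)^3 ≤ 1 := pow_le_one₀ h1.le h2
    apply div_nonneg _ (by positivity)
    linarith
  have hpm : π/2 ∈ Icc 0 (π/2) := ⟨by linarith, le_rfl⟩
  have gB : |sin (π/2/2) / (2 * cos (π/2/2) * (cos (π/2/2) + 1))| ≤ 1/2 := by
    have hc0 := cp0 _ hpm
    have : cos (π/2/2) = s0 := by rw [hs0, show π/2/2 = π/4 by ring, Real.sin_pi_div_four, Real.cos_pi_div_four]
    rw [this, ← hs0, abs_of_pos (by positivity), div_le_div_iff₀ (by positivity) (by norm_num)]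
    nlinarith
  have v := vdc2 (a := 0) (b := π/2) (by linarith) (φ := fun x => 1 - cos x) (φ' := sin) (g := fun x => sin (x/2) / (2 * cos (x/2) * (cos (x/2) + 1)))
    (g' := fun x => (1 + 2 * cos (x/2) - cos (x/2)^3) / (4 * cos (x/2)^2 * (cos (x/2) + 1)^2))
    (w := z) (A := 0) (B := 1/2) (V := 1/2) hz0 hz.le (fun x _ => by simpa using (Real.hasDerivAt_cos x).const_sub 1) gd
    (fun x _ => sub_nonneg.2 (Real.cos_le_one x)) gc (Continuous.continuousOn (by fun_prop)) (by simp) gB ?_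
  · rw [show (0:ℝ) + 1/2 + 1/2 = 1 by norm_num] at v
    have e4 : (∫ x in (0:ℝ)..(π/2), Complex.exp (-z * ((1 - cos x : ℝ):ℂ)) - ((cos (x/2) : ℝ):ℂ) * Complex.exp (-z * ((1 - cos x : ℝ):ℂ))) = ∫ x in (0:ℝ)..(π/2), ((sin (x/2) / (2 * cos (x/2) * (cos (x/2) + 1)) * sin x : ℝ):ℂ) * Complex.exp (-z * ((1 - cos x : ℝ):ℂ)) := by
      refine intervalIntegral.integral_congr fun x hx => ?_
      rw [uIcc_of_le (by linarith)] at hx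
      have : 1 - cos (x/2) = sin (x/2) / (2 * cos (x/2) * (cos (x/2) + 1)) * sin x := by
        rw [hsh x]
        have h1 := cp0 x hx
        have h2 := ssq x
        generalize sin (x/2) = s at *
        generalize cos (x/2) = c at *
        field_simp
        rw [h2]; ring
      beta_reduce
      rw [← this]; push_cast; ring
    rw [e4]
    refine (norm_sub_le _ _).trans ?_
    rw [norm_mul, Complex.norm_ofNat]
    have : 3 / ‖z‖ = 1/‖z‖ + 2 * (1/‖z‖) := by ring
    linarith
  · have : (∫ x in (0:ℝ)..(π/2), |(1 + 2 * cos (x/2) - cos (x/2)^3) / (4 * cos (x/2)^2 * (cos (x/2) + 1)^2)|) = ∫ x in (0:ℝ)..(π/2), (1 + 2 * cos (x/2) - cos (x/2)^3) / (4 * cos (x/2)^2 * (cos (x/2) + 1)^2) := by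
      refine intervalIntegral.integral_congr fun x hx => ?_
      rw [uIcc_of_le (by linarith)] at hx
      exact abs_of_nonneg (gp x hx)
    rw [this, intervalIntegral.integral_eq_sub_of_hasDerivAt (by rw [uIcc_of_le (by linarith)]; exact gd) (ContinuousOn.intervalIntegrable (by rw [uIcc_of_le (by linarith)]; exact gc))]
    simp only [zero_div, Real.sin_zero, sub_zero]
    exact (le_abs_self _).trans gB

lemma N_asymp {z : ℂ} (hr : 0 < z.re) (hi : 0 < z.im) (h1z : 1 ≤ ‖z‖) : ‖(z * (KU z * LU z))^2 + (π:ℂ)^2/4‖ ≤ 552 / sqrt ‖z‖ := by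
  have hz0 : z ≠ 0 := by rintro rfl; simp at hr
  have hn : 0 < ‖z‖ := by linarith
  have hsq := Real.sqrt_pos.2 hn
  have hs1 : 1 ≤ sqrt ‖z‖ := Real.one_le_sqrt.2 h1z
  have hss := Real.sq_sqrt hn.le
  set E1 := Complex.exp z * Kc z - Rc z with hE1
  set E2 := Complex.exp (-z) * Pc z + Complex.I * (Complex.exp (-z) * Cc (-z) - Rc z) with hE2
  have e : KU z * LU z = (Rc z + E1) * (Complex.I * Rc z + E2) := by
    rw [hE1, hE2, KU_eq hr hi]; unfold LU
    have : Complex.exp z * Complex.exp (-z) = 1 := by rw [← Complex.exp_add]; simp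
    linear_combination (-(Kc z * (Pc z + Complex.I * Cc (-z)))) * this
  have b1 : ‖E1‖ ≤ 2 / ‖z‖ := Kc_asymp hr
  have b2 : ‖E2‖ ≤ 5 / ‖z‖ := by
    have b3 : ‖Complex.exp (-z) * Pc z‖ ≤ 2 / ‖z‖ := by
      rw [norm_mul, Complex.norm_exp]
      calc exp (-z).re * ‖Pc z‖ ≤ 1 * (2/‖z‖) := by
            gcongr
            · rw [Real.exp_le_one_iff]; simpa using hr.le
            · exact Pc_bound hi
        _ = _ := one_mul _
    refine (norm_add_le _ _).trans ?_
    rw [norm_mul Complex.I, Complex.norm_I, one_mul]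
    have := Jc_asymp hr
    have q : 5 / ‖z‖ = 2 / ‖z‖ + 3 / ‖z‖ := by ring
    linarith
  have bR := Rc_norm hz0
  have d1 : ‖z * (KU z * LU z) - Complex.I * (π/2)‖ ≤ 24 / sqrt ‖z‖ := by
    have q : z * (KU z * LU z) - Complex.I * (π/2) = z * (Rc z * E2 + Complex.I * (Rc z * E1) + E1 * E2) := by
      rw [e]
      have h := Rc_sq hz0
      field_simp at h
      linear_combination Complex.I * h / 2
    rw [q, norm_mul]
    calc ‖z‖ * ‖Rc z * E2 + Complex.I * (Rc z * E1) + E1 * E2‖ ≤ ‖z‖ * (2 / sqrt ‖z‖ * (5/‖z‖) + 2 / sqrt ‖z‖ * (2/‖z‖) + 2/‖z‖ * (5/‖z‖)) := by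
          gcongr
          refine (norm_add_le _ _).trans (add_le_add ((norm_add_le _ _).trans (add_le_add ?_ ?_)) ?_)
          · rw [norm_mul]; gcongr
          · rw [norm_mul, norm_mul, Complex.norm_I, one_mul]; gcongr
          · rw [norm_mul]; gcongr
      _ = 14 / sqrt ‖z‖ + 10 / ‖z‖ := by field_simp; ring
      _ ≤ 14 / sqrt ‖z‖ + 10 / sqrt ‖z‖ := by gcongr; nlinarith
      _ = _ := by ring
  have d2 : ‖z * (KU z * LU z) + Complex.I * (π/2)‖ ≤ 23 := by
    refine (norm_add_le _ _).trans ?_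
    have h := N_bound hr hi h1z
    have h2 : ‖z * (KU z * LU z)‖ ≤ 21 := by
      rw [norm_mul]
      calc _ ≤ ‖z‖ * (21/‖z‖) := by gcongr
        _ = 21 := by field_simp
    have h3 : ‖Complex.I * ((π:ℂ)/2)‖ ≤ 2 := by
      rw [norm_mul, Complex.norm_I, one_mul, norm_div]; simp [abs_of_pos pi_pos]; linarith [pi_lt_four]
    linarith
  have f : (z * (KU z * LU z))^2 + (π:ℂ)^2/4 = (z * (KU z * LU z) - Complex.I * (π/2)) * (z * (KU z * LU z) + Complex.I * (π/2)) := by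
    linear_combination (π:ℂ)^2/4 * Complex.I_sq
  rw [f, norm_mul]
  calc _ ≤ 24 / sqrt ‖z‖ * 23 := by gcongr
    _ = _ := by ring


noncomputable def Hd (z : ℂ) : ℂ := z * (KU z * LU z) ^ 2

lemma Hd_diff {z : ℂ} (hz : 0 < z.im) : DifferentiableAt ℂ Hd z :=
  differentiableAt_id.mul (((KU_diff hz).mul (LU_diff hz)).pow 2)

noncomputable def Gd (z : ℂ) : ℂ := Hd z + (π:ℂ)^2/4 * z⁻¹

lemma Gd_diff {z : ℂ} (hz : 0 < z.im) : DifferentiableAt ℂ Gd z :=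
  (Hd_diff hz).add ((differentiableAt_inv (by rintro rfl; simp at hz)).const_mul _)

lemma Gd_bound {z : ℂ} {T : ℝ} (hT : 1 ≤ T) (hr : 0 < z.re) (hi : 0 < z.im) (h1z : T ≤ ‖z‖) : ‖Gd z‖ ≤ 552 / sqrt T / T := by
  have h := N_asymp hr hi (hT.trans h1z)
  have hn : 0 < ‖z‖ := by linarith
  have hz0 : z ≠ 0 := norm_pos_iff.1 hn
  have hT0 : 0 < T := by linarith
  have hsq := Real.sqrt_pos.2 hT0
  have e : Gd z = ((z * (KU z * LU z))^2 + (π:ℂ)^2/4) / z := by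
    unfold Gd Hd; field_simp
  rw [e, norm_div]
  calc _ ≤ 552 / sqrt ‖z‖ / ‖z‖ := by gcongr
    _ ≤ _ := by gcongr

lemma Gd_im {T ε : ℝ} (hT : 1 ≤ T) (hε : 0 < ε) (hε1 : ε ≤ 1) :
    |(∫ x in (0:ℝ)..T, Gd (x + ε * Complex.I)).im| ≤ 1104 / sqrt T := by
  have hT0 : 0 < T := by linarith
  have h := Complex.integral_boundary_rect_eq_zero_of_differentiableOn Gd (⟨0, ε⟩ : ℂ) (⟨T, T⟩ : ℂ) (by
    intro z hz
    refine (Gd_diff ?_).differentiableWithinAt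
    have h2 := hz.2
    simp only [mem_preimage] at h2
    rw [uIcc_of_le (by linarith)] at h2
    exact hε.trans_le h2.1)
  simp only [smul_eq_mul] at h
  have hl : (Complex.I * ∫ y in ε..T, Gd ((0:ℝ) + y * Complex.I)).im = 0 := by
    rw [← intervalIntegral.integral_const_mul]
    have : (fun y : ℝ => Complex.I * Gd ((0:ℝ) + y * Complex.I)) = fun y : ℝ => ((-(y * (Complex.normSq (KU (Complex.I * y)))^2) + π^2/4 * y⁻¹ : ℝ):ℂ) := by
      funext y
      unfold Gd Hd
      rw [show ((0:ℝ):ℂ) + y * Complex.I = Complex.I * y by push_cast; ring, conj_KU, Complex.mul_conj, mul_inv]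
      push_cast
      have : Complex.I * Complex.I⁻¹ = 1 := mul_inv_cancel₀ Complex.I_ne_zero
      linear_combination (y:ℂ) * (Complex.normSq (KU (Complex.I * y)) : ℂ)^2 * Complex.I_sq + (π:ℂ)^2/4 * (y:ℂ)⁻¹ * this
    rw [this, intervalIntegral.integral_ofReal, Complex.ofReal_im]
  have ht : ‖∫ x in (0:ℝ)..T, Gd (x + T * Complex.I)‖ ≤ 552/sqrt T/T * |T - 0| := by
    refine intervalIntegral.norm_integral_le_of_norm_le_const fun x hx => ?_
    rw [uIoc_of_le hT0.le] at hx
    refine Gd_bound hT (by simpa using hx.1) (by simpa using hT0) ?_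
    have := Complex.abs_im_le_norm ((x:ℂ) + T * Complex.I)
    simp [abs_of_pos hT0] at this; exact this
  have hR : ‖∫ y in ε..T, Gd (T + y * Complex.I)‖ ≤ 552/sqrt T/T * |T - ε| := by
    refine intervalIntegral.norm_integral_le_of_norm_le_const fun x hx => ?_
    rw [uIoc_of_le (by linarith)] at hx
    refine Gd_bound hT (by simpa using hT0) (by simpa using hε.trans hx.1) ?_
    have := Complex.abs_re_le_norm ((T:ℂ) + x * Complex.I)
    simp [abs_of_pos hT0] at this; exact this
  have e : (∫ x in (0:ℝ)..T, Gd (x + ε * Complex.I)).im = (∫ x in (0:ℝ)..T, Gd (x + T * Complex.I)).im - (Complex.I * ∫ y in ε..T, Gd (T + y * Complex.I)).im := by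
    have := congrArg Complex.im h
    simp only [Complex.sub_im, Complex.add_im, Complex.zero_im] at this
    rw [hl] at this
    linarith
  rw [e]
  have a1 := (Complex.abs_im_le_norm _).trans ht
  have a2 := (Complex.abs_im_le_norm (Complex.I * ∫ y in ε..T, Gd (T + y * Complex.I)))
  rw [norm_mul, Complex.norm_I, one_mul] at a2
  have a2 := a2.trans hR
  refine (abs_sub _ _).trans ?_
  rw [sub_zero, abs_of_pos hT0] at a1
  rw [abs_of_nonneg (by linarith : 0 ≤ T - ε)] at a2
  have a3 : 552/sqrt T/T * (T - ε) ≤ 552/sqrt T/T * T := by gcongr; linarith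
  have a4 : 552/sqrt T/T * T = 552/sqrt T := by field_simp
  have a5 : 1104/sqrt T = 552/sqrt T + 552/sqrt T := by ring
  linarith

noncomputable def hd2 (x : ℝ) : ℂ := x * ((K0 x : ℝ) * ((K0 x : ℝ) + Complex.I * ((π * I0 x : ℝ):ℂ)))^2

lemma Hd_tendsto {T : ℝ} (hT : 1 ≤ T) : Filter.Tendsto (fun ε : ℝ => ∫ x in (0:ℝ)..T, Hd (x + ε * Complex.I)) (nhdsWithin 0 (Ioi 0)) (nhds (∫ x in (0:ℝ)..T, hd2 x)) ∧ IntervalIntegrable hd2 volume 0 T := by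
  have hT0 : 0 < T := by linarith
  set c := 128 + π * exp T * T^(1/8:ℝ) with hc
  have hH : ∀ x ε : ℝ, 0 < x → 0 < ε → Hd (x + ε * Complex.I) = (x + ε * Complex.I) * (Kc (x + ε * Complex.I) * (Kc (x + ε * Complex.I) + Complex.I * ∫ y in (0:ℝ)..π, Complex.exp ((x + ε * Complex.I) * (cos y : ℝ))))^2 := by
    intro x ε hx hε
    unfold Hd
    rw [LU_eq (by simpa using hx) (by simpa using hε), KU_eq (by simpa using hx) (by simpa using hε)]
  have hbd : IntervalIntegrable (fun x : ℝ => (T+1) * c^4 * x^(-(1/2):ℝ)) volume 0 T := (intervalIntegral.intervalIntegrable_rpow' (by norm_num)).const_mul _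
  have hb : ∀ x ∈ Ioc 0 T, ∀ ε : ℝ, 0 < ε → ε < 1 → ‖Hd (x + ε * Complex.I)‖ ≤ (T+1) * c^4 * x^(-(1/2):ℝ) := by
    intro x hx ε hε hε1
    have hx0 : 0 < x := hx.1
    rw [hH x ε hx0 hε]
    set z : ℂ := x + ε * Complex.I with hz
    have hzr : z.re = x := by simp [hz]
    set k := x^(-(1/8):ℝ) with hk
    have hk0 : 0 < k := rpow_pos_of_pos hx0 _
    have b1 : ‖Kc z‖ ≤ 128 * k := by
      refine (Kc_norm (by rw [hzr]; exact hx0)).trans ?_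
      rw [hzr]
      refine (K0_bound hx0).trans ?_
      exact mul_le_of_le_one_right (by positivity) (Real.exp_le_one_iff.2 (by linarith))
    have b2 : ‖∫ y in (0:ℝ)..π, Complex.exp (z * (cos y : ℝ))‖ ≤ π * exp T := by
      have := intervalIntegral.norm_integral_le_of_norm_le_const (a := 0) (b := π) (C := exp T) (f := fun y : ℝ => Complex.exp (z * (cos y : ℝ))) (fun y _ => ?_)
      · rw [sub_zero, abs_of_pos pi_pos] at this; linarith
      · rw [Complex.norm_exp, Complex.re_mul_ofReal, hzr]
        apply Real.exp_le_exp.2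
        nlinarith [cos_le_one y, hx.2]
    have hTk : 1 ≤ T^(1/8:ℝ) * k := by
      rw [hk, rpow_neg hx0.le, ← div_eq_mul_inv, le_div_iff₀ (rpow_pos_of_pos hx0 _), one_mul]
      exact rpow_le_rpow hx0.le hx.2 (by norm_num)
    have b3 : ‖Kc z + Complex.I * ∫ y in (0:ℝ)..π, Complex.exp (z * (cos y : ℝ))‖ ≤ c * k := by
      refine (norm_add_le _ _).trans ?_
      rw [norm_mul, Complex.norm_I, one_mul]
      have : π * exp T * 1 ≤ π * exp T * (T^(1/8:ℝ) * k) := by gcongr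
      rw [hc]; nlinarith
    have b4 : ‖Kc z‖ ≤ c * k := by
      refine b1.trans ?_
      gcongr; rw [hc]; have : 0 ≤ π * exp T * T^(1/8:ℝ) := by positivity
      linarith
    have b5 : ‖z‖ ≤ T + 1 := by
      refine (norm_add_le _ _).trans ?_
      rw [norm_mul, Complex.norm_I, mul_one, Complex.norm_real, Complex.norm_real, Real.norm_of_nonneg hx0.le, Real.norm_of_nonneg hε.le]
      linarith [hx.2]
    have hk6 : k^4 = x^(-(1/2):ℝ) := by
      rw [hk, ← rpow_natCast, ← rpow_mul hx0.le]; norm_num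
    rw [norm_mul, norm_pow, norm_mul, ← hk6]
    have hck : 0 ≤ c * k := (norm_nonneg _).trans b4
    calc _ ≤ (T+1) * ((c*k)*(c*k))^2 := by gcongr
      _ = _ := by ring
  have hlim : ∀ x ∈ Ioc 0 T, Filter.Tendsto (fun ε : ℝ => Hd (x + ε * Complex.I)) (nhdsWithin 0 (Ioi 0)) (nhds (hd2 x)) := by
    intro x hx
    have hx0 : 0 < x := hx.1
    have l0 : Filter.Tendsto (fun ε : ℝ => (x:ℂ) + ε * Complex.I) (nhdsWithin 0 (Ioi 0)) (nhds (x:ℂ)) := by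
      have c : Continuous (fun ε : ℝ => (x:ℂ) + ε * Complex.I) := by fun_prop
      have := (c.tendsto 0).mono_left (nhdsWithin_le_nhds (s := Ioi 0))
      simpa using this
    have l := l0.mul (((Kc_tendsto hx0).mul ((Kc_tendsto hx0).add ((Jc_tendsto x).const_mul Complex.I))).pow 2)
    refine l.congr' ?_
    filter_upwards [self_mem_nhdsWithin] with ε hε
    rw [hH x ε hx0 hε]
  have he1 : ∀ᶠ ε : ℝ in nhdsWithin 0 (Ioi 0), ε < 1 := nhdsWithin_le_nhds (gt_mem_nhds one_pos)
  constructor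
  · refine intervalIntegral.tendsto_integral_filter_of_dominated_convergence (fun x => (T+1) * c^4 * x^(-(1/2):ℝ)) ?_ ?_ hbd ?_
    · filter_upwards [self_mem_nhdsWithin] with ε hε
      refine Continuous.aestronglyMeasurable ?_
      refine continuous_iff_continuousAt.2 fun x => ?_
      exact ContinuousAt.comp (f := fun x : ℝ => (x:ℂ) + ε * Complex.I) (g := Hd) (Hd_diff (by simpa using hε)).continuousAt (by fun_prop)
    · filter_upwards [self_mem_nhdsWithin, he1] with ε hε hε1
      refine Filter.Eventually.of_forall fun x hx => ?_
      rw [uIoc_of_le hT0.le] at hx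
      exact hb x hx ε hε hε1
    · refine Filter.Eventually.of_forall fun x hx => ?_
      rw [uIoc_of_le hT0.le] at hx
      exact hlim x hx
  · rw [intervalIntegrable_iff_integrableOn_Ioc_of_le hT0.le] at hbd ⊢
    have co : ContinuousOn hd2 (Ioi 0) := by
      have a1 : ContinuousOn (fun x => ((K0 x : ℝ):ℂ)) (Ioi 0) := Complex.continuous_ofReal.comp_continuousOn cK
      have a2 : ContinuousOn (fun x => ((π * I0 x : ℝ):ℂ)) (Ioi 0) := Complex.continuous_ofReal.comp_continuousOn (continuousOn_const.mul cI)
      exact (Complex.continuous_ofReal.continuousOn).mul ((a1.mul (a1.add (continuousOn_const.mul a2))).pow 2)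
    refine Integrable.mono' hbd ((co.mono Ioc_subset_Ioi_self).aestronglyMeasurable measurableSet_Ioc) ?_
    refine (ae_restrict_iff' measurableSet_Ioc).2 (Filter.Eventually.of_forall fun x hx => ?_)
    refine le_of_tendsto (hlim x hx).norm ?_
    filter_upwards [self_mem_nhdsWithin, he1] with ε hε hε1
    exact hb x hx ε hε hε1

lemma hd2_im (x : ℝ) : (hd2 x).im = 2 * π * (x^(2*0+1) * e0 x) := by
  have : hd2 x = ((x * K0 x^2 * (K0 x^2 - (π * I0 x)^2) : ℝ):ℂ) + ((2 * π * (x^(2*0+1) * e0 x) : ℝ):ℂ) * Complex.I := by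
    unfold hd2 e0
    push_cast
    linear_combination (x:ℂ) * (K0 x:ℂ)^2 * ((π:ℂ) * I0 x)^2 * Complex.I_sq
  rw [this, Complex.add_im, Complex.ofReal_im, Complex.im_ofReal_mul, Complex.I_im]; ring

lemma inv_im {T ε : ℝ} (hε : 0 < ε) : (∫ x in (0:ℝ)..T, (π:ℂ)^2/4 * ((x:ℂ) + ε * Complex.I)⁻¹).im = -(π^2/4 * arctan (T/ε)) := by
  have hc : Continuous (fun x : ℝ => (π:ℂ)^2/4 * ((x:ℂ) + ε * Complex.I)⁻¹) := by
    refine continuous_const.mul (Continuous.inv₀ (by fun_prop) fun x h => ?_)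
    have := congrArg Complex.im h
    simp at this; exact hε.ne' this
  have := Complex.imCLM.intervalIntegral_comp_comm (hc.intervalIntegrable (μ := volume) 0 T)
  simp only [Complex.imCLM_apply] at this
  rw [← this]
  have e2 : (fun x : ℝ => ((π:ℂ)^2/4 * ((x:ℂ) + ε * Complex.I)⁻¹).im) = fun x => -(π^2/4) * (ε / (x^2 + ε^2)) := by
    funext x
    rw [show (π:ℂ)^2/4 = ((π^2/4 : ℝ):ℂ) by push_cast; rfl, Complex.im_ofReal_mul, Complex.inv_im, Complex.normSq_apply]
    simp
    ring_nf
  have h := intervalIntegral.integral_eq_sub_of_hasDerivAt (a := 0) (b := T) (f := fun x => arctan (x/ε)) (f' := fun x => ε/(x^2+ε^2)) (fun x _ => by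
    refine (((hasDerivAt_id x).div_const ε).arctan).congr_deriv ?_
    simp only [id]
    field_simp
    ring) (Continuous.intervalIntegrable (Continuous.div (by fun_prop) (by fun_prop) fun x => by positivity) _ _)
  rw [e2, intervalIntegral.integral_const_mul, h]
  simp

lemma Mo_fin {T : ℝ} (hT : 1 ≤ T) : |2 * π * (∫ x in (0:ℝ)..T, x^(2*0+1) * e0 x) - π^3/8| ≤ 1104 / sqrt T := by
  have hT0 : 0 < T := by linarith
  obtain ⟨l, hint⟩ := Hd_tendsto hT
  have l := (Complex.continuous_im.tendsto _).comp l
  have e : (∫ x in (0:ℝ)..T, hd2 x).im = 2 * π * (∫ x in (0:ℝ)..T, x^(2*0+1) * e0 x) := by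
    have := Complex.imCLM.intervalIntegral_comp_comm hint
    simp only [Complex.imCLM_apply] at this
    rw [← this, ← intervalIntegral.integral_const_mul]
    congr 1; funext x; exact hd2_im x
  rw [e] at l
  have l2 : Filter.Tendsto (fun ε : ℝ => -(π^2/4 * arctan (T/ε))) (nhdsWithin 0 (Ioi 0)) (nhds (-(π^2/4 * (π/2)))) := by
    refine (Filter.Tendsto.const_mul _ ?_).neg
    have q : Filter.Tendsto (fun ε : ℝ => T/ε) (nhdsWithin 0 (Ioi 0)) Filter.atTop := by
      simp only [div_eq_mul_inv]
      exact tendsto_inv_nhdsGT_zero.const_mul_atTop hT0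
    exact (tendsto_nhds_of_tendsto_nhdsWithin tendsto_arctan_atTop).comp q
  have l3 := (l.add l2).abs
  rw [show π^3/8 = π^2/4*(π/2) by ring, sub_eq_add_neg]
  refine le_of_tendsto l3 ?_
  have he1 : ∀ᶠ ε : ℝ in nhdsWithin 0 (Ioi 0), ε < 1 := nhdsWithin_le_nhds (gt_mem_nhds one_pos)
  filter_upwards [self_mem_nhdsWithin, he1] with ε hε hε1
  have hε : 0 < ε := hε
  have h := Gd_im hT hε hε1.le
  unfold Gd at h
  rw [intervalIntegral.integral_add, Complex.add_im, inv_im hε] at h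
  · exact h
  · refine Continuous.intervalIntegrable ?_ _ _
    refine continuous_iff_continuousAt.2 fun x => ?_
    exact ContinuousAt.comp (f := fun x : ℝ => (x:ℂ) + ε * Complex.I) (g := Hd) (Hd_diff (by simpa using hε)).continuousAt (by fun_prop)
  · refine Continuous.intervalIntegrable ?_ _ _
    refine continuous_const.mul (Continuous.inv₀ (by fun_prop) fun x h => ?_)
    have := congrArg Complex.im h
    simp at this; exact hε.ne' this

lemma Mo_zero : Mo 0 = π^2/16 := by
  have hi : IntegrableOn (fun t => t^(2*0+1) * e0 t) (Ioi 0) := bnd0.int _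
  have l1 : Filter.Tendsto (fun T : ℝ => ∫ x in (0:ℝ)..T, x^(2*0+1) * e0 x) Filter.atTop (nhds (Mo 0)) :=
    intervalIntegral_tendsto_integral_Ioi 0 hi Filter.tendsto_id
  have l0 : Filter.Tendsto (fun T : ℝ => 2 * π * (∫ x in (0:ℝ)..T, x^(2*0+1) * e0 x) - π^3/8) Filter.atTop (nhds 0) := by
    refine squeeze_zero_norm' ?_ (Filter.Tendsto.div_atTop (tendsto_const_nhds (x := (1104:ℝ))) Real.tendsto_sqrt_atTop)
    filter_upwards [Filter.eventually_ge_atTop 1] with T hT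
    exact Mo_fin hT
  have := tendsto_nhds_unique l0 ((l1.const_mul (2*π)).sub_const (π^3/8))
  have hp := pi_pos
  have h2 : 2 * π * (Mo 0 - π^2/16) = 0 := by linarith
  have := (mul_eq_zero.1 h2).resolve_left (by positivity)
  linarith

theorem watson_one_eq_sunrise :
    (1 / (4 * π^4)) *
      (∫ p1 in (0:ℝ)..π, ∫ p2 in (0:ℝ)..π, ∫ p3 in (0:ℝ)..π, ∫ p4 in (0:ℝ)..π,
        1 / (1 - (1/4) * (cos p1 + cos p2 + cos p3 + cos p4)))
    = (12 / π^4) * ∫ t in Ioi (0:ℝ), I0 t * (K0 t)^5 * t := by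
  have h1 := series_link
  have h2 := sum_rule
  simp only [g1, g2] at h2
  rw [watson_lhs]
  rw [h1, Mo_zero] at h2
  have hp := pi_pos
  field_simp
  linear_combination (-4) * h2
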